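/- arXiv:1507.05412 — 3 statements merged into one kernel-verified Lean document; each statement's English description precedes it below -/
import Mathlib

section
/- There exists a constant C > 0 depending only on n such that ‖f‖_{C²} ≤ C ‖f + (n−1)^{-1} Δ_S f‖_{C⁰} for every SO(n−1) invariant function f ∈ C²(S^{n-1}) whose spherical harmonic projection of degree 1 vanishes (π₁ f = 0). -/
open scoped RealInnerProductSpace
open MeasureTheory

noncomputable section

abbrev Eucl (n : ℕ) := EuclideanSpace ℝ (Fin n)

/-- The degree-zero homogeneous extension of a function on the unit sphere. -/
def sphereExt {n : ℕ} (f : Eucl n → ℝ) : Eucl n → ℝ := fun x => f (‖x‖⁻¹ • x)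

/-- The Laplace–Beltrami operator on the unit sphere `S^{n-1}`. -/
def sLap (n : ℕ) (f : Eucl n → ℝ) (u : Eucl n) : ℝ :=
  ∑ i : Fin n, iteratedFDeriv ℝ 2 (sphereExt f) u (fun _ => EuclideanSpace.single i 1)

/-- Squared norm of the Riemannian gradient on the unit sphere. -/
def sGradNormSq (n : ℕ) (f : Eucl n → ℝ) (u : Eucl n) : ℝ := ‖gradient (sphereExt f) u‖ ^ 2

/-- Orthogonal projection of `v` onto the tangent space of the unit sphere at `u`. -/
def tanProj {n : ℕ} (u v : Eucl n) : Eucl n := v - ⟪v, u⟫ • u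

/-- Squared tensor norm of the covariant Hessian on the round unit sphere. -/
def sHessNormSq (n : ℕ) (f : Eucl n → ℝ) (u : Eucl n) : ℝ :=
  ∑ i : Fin n, ∑ j : Fin n,
    (iteratedFDeriv ℝ 2 (sphereExt f) u
      ![tanProj u (EuclideanSpace.single i 1), tanProj u (EuclideanSpace.single j 1)]) ^ 2

/-- The `C²` norm `‖f‖_{C²} = max|f| + max|∇f| + max|∇²f|` on the unit sphere. -/
def C2norm (n : ℕ) (f : Eucl n → ℝ) : ℝ :=
  (⨆ u : Metric.sphere (0 : Eucl n) 1, |f u|)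
    + (⨆ u : Metric.sphere (0 : Eucl n) 1, Real.sqrt (sGradNormSq n f u))
    + ⨆ u : Metric.sphere (0 : Eucl n) 1, Real.sqrt (sHessNormSq n f u)

/-- One-sided maximum principle for the function F minus t times its derivative. -/
lemma zonal_maxprinciple (k M : ℝ) (hk : 0 < k) (F : ℝ → ℝ) (hF : ContDiff ℝ 2 F)
    (hG : ∀ t ∈ Set.Icc (-1:ℝ) 1,
      F t + 1 / k * ((1 - t^2) * deriv (deriv F) t - k * t * deriv F t) ≤ M) :
    ∀ t ∈ Set.Icc (-1:ℝ) 1, F t - t * deriv F t ≤ M := by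
  have hF1 : ∀ t, HasDerivAt F (deriv F t) t := fun t =>
    ((hF.differentiable (by norm_num)) t).hasDerivAt
  have hdF : ContDiff ℝ 1 (deriv F) := by
    have : ContDiff ℝ (1+1) F := by convert hF using 1; norm_num
    exact (contDiff_succ_iff_deriv.1 this).2.2
  have hF2 : ∀ t, HasDerivAt (deriv F) (deriv (deriv F) t) t := fun t =>
    ((hdF.differentiable (by norm_num)) t).hasDerivAt
  have hc2 : Continuous (deriv (deriv F)) := hdF.continuous_deriv (by norm_num)
  have hH : ∀ t, HasDerivAt (fun t => F t - t * deriv F t) (- t * deriv (deriv F) t) t := by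
    intro t
    have := (hF1 t).sub ((hasDerivAt_id t).mul (hF2 t))
    refine this.congr_deriv ?_
    simp
  have hHc : Continuous (fun t => F t - t * deriv F t) :=
    continuous_iff_continuousAt.2 fun t => (hH t).continuousAt
  obtain ⟨s, hs, hmax⟩ := (isCompact_Icc (a := (-1:ℝ)) (b := 1)).exists_isMaxOn
    ⟨0, by norm_num⟩ hHc.continuousOn
  intro t ht
  refine (hmax ht).trans ?_
  simp only
  have hkey : 0 ≤ (1 - s^2) * deriv (deriv F) s := by
    by_cases h1 : s = 1
    · subst h1; simp
    by_cases h2 : s = -1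
    · subst h2; simp
    have hs1 : -1 < s := lt_of_le_of_ne hs.1 (Ne.symm h2)
    have hs2 : s < 1 := lt_of_le_of_ne hs.2 h1
    have : 0 ≤ deriv (deriv F) s := by
      by_cases h0 : s = 0
      · subst h0
        by_contra hneg
        push Not at hneg
        have hev : ∀ᶠ x in nhds (0:ℝ), deriv (deriv F) x < 0 := hc2.continuousAt.eventually_lt continuousAt_const hneg
        obtain ⟨δ, hδ, hball⟩ := Metric.eventually_nhds_iff.1 hev
        set d := min (δ/2) 1 with hd
        have hd0 : 0 < d := by positivity
        have hdδ : d < δ := lt_of_le_of_lt (min_le_left _ _) (by linarith)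
        have hsm : StrictMonoOn (fun t => F t - t * deriv F t) (Set.Icc 0 d) := by
          apply strictMonoOn_of_deriv_pos (convex_Icc _ _) hHc.continuousOn
          intro x hx
          rw [interior_Icc] at hx
          rw [(hH x).deriv]
          have := hball (y := x) (by rw [Real.dist_eq, sub_zero, abs_of_pos hx.1]; linarith [hx.2])
          nlinarith [hx.1]
        have h3 := hsm ⟨le_rfl, hd0.le⟩ ⟨hd0.le, le_rfl⟩ hd0
        have h4 := hmax (show d ∈ Set.Icc (-1:ℝ) 1 from ⟨by linarith, min_le_right _ _⟩)
        exact absurd h3 (not_lt.2 h4)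
      · have hloc : IsLocalMax (fun t => F t - t * deriv F t) s :=
          hmax.isLocalMax (Icc_mem_nhds hs1 hs2)
        have := hloc.hasDerivAt_eq_zero (hH s)
        rcases mul_eq_zero.1 this with h | h
        · exact absurd (neg_eq_zero.1 h) h0
        · exact h.ge
    have : 0 ≤ 1 - s^2 := by nlinarith
    positivity
  have := hG s hs
  have h5 : 1 / k * ((1 - s^2) * deriv (deriv F) s - k * s * deriv F s)
    = 1 / k * ((1 - s^2) * deriv (deriv F) s) - s * deriv F s := by field_simp
  rw [h5] at this
  have : 0 ≤ 1 / k * ((1 - s^2) * deriv (deriv F) s) := by positivity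
  linarith

lemma zonal_ode_half (k M : ℝ) (hk : 1 ≤ k) (F : ℝ → ℝ) (hF : ContDiff ℝ 2 F)
    (hG : ∀ t ∈ Set.Icc (-1:ℝ) 1,
      |F t + 1 / k * ((1 - t^2) * deriv (deriv F) t - k * t * deriv F t)| ≤ M) :
    ∀ t ∈ Set.Icc (0:ℝ) 1, (1 - t^2) * |deriv (deriv F) t| ≤ 2 * k * M ∧
      |F t - t * deriv F 0| ≤ (10 + 4 * k) * M ∧ |deriv F t - deriv F 0| ≤ (10 + 4 * k) * M := by
  have hk0 : 0 < k := by linarith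
  have hM : 0 ≤ M := (abs_nonneg _).trans (hG 0 (by norm_num))
  have hF1 : ∀ t, HasDerivAt F (deriv F t) t := fun t =>
    ((hF.differentiable (by norm_num)) t).hasDerivAt
  have hdF : ContDiff ℝ 1 (deriv F) := by
    have : ContDiff ℝ (1+1) F := by convert hF using 1; norm_num
    exact (contDiff_succ_iff_deriv.1 this).2.2
  have hF2 : ∀ t, HasDerivAt (deriv F) (deriv (deriv F) t) t := fun t =>
    ((hdF.differentiable (by norm_num)) t).hasDerivAt
  have hHu := zonal_maxprinciple k M hk0 F hF (fun t ht => (abs_le.1 (hG t ht)).2)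
  have hHl := zonal_maxprinciple k M hk0 (fun t => - F t) hF.neg (by
    intro t ht
    have h1 : deriv (fun t => - F t) = fun t => - deriv F t := by ext; simp
    have h2 : deriv (fun t => - deriv F t) = fun t => - deriv (deriv F) t := by ext; simp
    rw [h1, h2]
    have := (abs_le.1 (hG t ht)).1
    simp only
    linarith)
  have hHabs : ∀ t ∈ Set.Icc (-1:ℝ) 1, |F t - t * deriv F t| ≤ M := by
    intro t ht
    have h1 : deriv (fun t => - F t) = fun t => - deriv F t := by ext; simp
    have h3 := hHl t ht
    rw [h1] at h3
    simp only at h3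
    exact abs_le.2 ⟨by linarith, hHu t ht⟩
  have hD2 : ∀ t ∈ Set.Icc (-1:ℝ) 1, (1 - t^2) * |deriv (deriv F) t| ≤ 2 * k * M := by
    intro t ht
    have h1 := hHabs t ht
    have h2 := hG t ht
    have h3 : (1 - t^2) * deriv (deriv F) t = k * ((F t + 1 / k * ((1 - t^2) * deriv (deriv F) t - k * t * deriv F t)) - (F t - t * deriv F t)) := by
      field_simp; ring
    have h4 : 0 ≤ 1 - t^2 := by nlinarith [ht.1, ht.2]
    calc (1 - t^2) * |deriv (deriv F) t| = |(1 - t^2) * deriv (deriv F) t| := by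
          rw [abs_mul, abs_of_nonneg h4]
      _ = k * |(F t + 1 / k * ((1 - t^2) * deriv (deriv F) t - k * t * deriv F t)) - (F t - t * deriv F t)| := by
          refine (congrArg abs h3).trans ?_
          rw [abs_mul, abs_of_pos hk0]
      _ ≤ k * (M + M) := by
          gcongr
          exact (abs_sub _ _).trans (add_le_add h2 h1)
      _ = _ := by ring
  have hsmall : ∀ t ∈ Set.Icc (0:ℝ) (1/2), |deriv F t - deriv F 0| ≤ 3 * k * M * t := by
    intro t ht
    have := (convex_Icc (0:ℝ) (1/2)).norm_image_sub_le_of_norm_hasDerivWithin_le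
      (f := deriv F) (f' := deriv (deriv F)) (C := 3 * k * M)
      (fun x _ => (hF2 x).hasDerivWithinAt) (fun x hx => by
        have h1 := hD2 x ⟨by linarith [hx.1], by linarith [hx.2]⟩
        have h2 : 3/4 ≤ 1 - x^2 := by nlinarith [hx.1, hx.2]
        rw [Real.norm_eq_abs]
        have h3 : 0 ≤ k * M := by positivity
        nlinarith [abs_nonneg (deriv (deriv F) x)]) (x := 0) (y := t) ⟨le_rfl, by norm_num⟩ ht
    simpa [Real.norm_eq_abs, abs_of_nonneg ht.1] using this
  have hsmallF : ∀ t ∈ Set.Icc (0:ℝ) (1/2), |F t - t * deriv F 0| ≤ (1 + k) * M := by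
    intro t ht
    have h1 := hHabs t ⟨by linarith [ht.1], by linarith [ht.2]⟩
    have h2 := hsmall t ht
    have h3 : F t - t * deriv F 0 = (F t - t * deriv F t) + t * (deriv F t - deriv F 0) := by ring
    rw [h3]
    refine (abs_add_le _ _).trans ?_
    rw [abs_mul, abs_of_nonneg ht.1]
    have h4 : t * |deriv F t - deriv F 0| ≤ (1/2) * (3 * k * M * (1/2)) := by
      gcongr
      · exact ht.2
      · refine h2.trans ?_
        have := ht.2
        gcongr
    have h3 : 0 ≤ k * M := by positivity
    linarith
  intro t ht
  refine ⟨hD2 t ⟨by linarith [ht.1], ht.2⟩, ?_⟩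
  have hkM : 0 ≤ k * M := by positivity
  by_cases hc : t ≤ 1/2
  · have h1 := hsmall t ⟨ht.1, hc⟩
    have h2 := hsmallF t ⟨ht.1, hc⟩
    constructor
    · linarith
    · have : 3 * k * M * t ≤ 3 * k * M * (1/2) := by gcongr
      linarith
  · push Not at hc
    have ht0 : 0 < t := by linarith
    have hq := (convex_Icc (1/2:ℝ) 1).norm_image_sub_le_of_norm_hasDerivWithin_le
      (f := fun x => F x / x) (f' := fun x => (deriv F x * x - F x * 1) / x^2) (C := 4 * M)
      (fun x hx => ((hF1 x).div (hasDerivAt_id x) (by simp only [id]; linarith [hx.1])).hasDerivWithinAt)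
      (fun x hx => by
        have h1 := hHabs x ⟨by linarith [hx.1], hx.2⟩
        have h2 : 1/4 ≤ x^2 := by nlinarith [hx.1]
        rw [Real.norm_eq_abs, abs_div, abs_of_nonneg (sq_nonneg x), div_le_iff₀ (by linarith)]
        have h3 : |deriv F x * x - F x * 1| = |F x - x * deriv F x| := by
          rw [← abs_neg]; congr 1; ring
        rw [h3]
        nlinarith) (x := 1/2) (y := t) ⟨le_rfl, by norm_num⟩ ⟨hc.le, ht.2⟩
    simp only [Real.norm_eq_abs] at hq
    rw [abs_of_pos (show 0 < t - 1/2 by linarith)] at hq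
    have hh := hsmallF (1/2) (by norm_num)
    have hq2 : |F t / t - deriv F 0| ≤ (4 + 2 * k) * M := by
      have e1 : F t / t - deriv F 0 = (F t / t - F (1/2) / (1/2)) + 2 * (F (1/2) - 1/2 * deriv F 0) := by ring
      rw [e1]
      refine (abs_add_le _ _).trans ?_
      rw [abs_mul, abs_of_pos (show (0:ℝ) < 2 by norm_num)]
      have : 4 * M * (t - 1/2) ≤ 4 * M * (1/2) := by
        gcongr; linarith [ht.2]
      linarith
    have hA : |F t - t * deriv F 0| ≤ (4 + 2 * k) * M := by
      have e1 : F t - t * deriv F 0 = t * (F t / t - deriv F 0) := by field_simp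
      rw [e1, abs_mul, abs_of_pos ht0]
      nlinarith [ht.2, abs_nonneg (F t / t - deriv F 0)]
    refine ⟨by linarith, ?_⟩
    have h1 := hHabs t ⟨by linarith, ht.2⟩
    have e2 : t * (deriv F t - deriv F 0) = (F t - t * deriv F 0) - (F t - t * deriv F t) := by ring
    have h2 : t * |deriv F t - deriv F 0| ≤ (5 + 2 * k) * M := by
      rw [← abs_of_pos ht0, ← abs_mul, abs_of_pos ht0, e2]
      refine (abs_sub _ _).trans ?_
      linarith
    nlinarith [abs_nonneg (deriv F t - deriv F 0)]

lemma zonal_ode (k M : ℝ) (hk : 1 ≤ k) (F : ℝ → ℝ) (hF : ContDiff ℝ 2 F)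
    (hG : ∀ t ∈ Set.Icc (-1:ℝ) 1,
      |F t + 1 / k * ((1 - t^2) * deriv (deriv F) t - k * t * deriv F t)| ≤ M) :
    ∀ t ∈ Set.Icc (-1:ℝ) 1, (1 - t^2) * |deriv (deriv F) t| ≤ 2 * k * M ∧
      |F t - t * deriv F 0| ≤ (10 + 4 * k) * M ∧ |deriv F t - deriv F 0| ≤ (10 + 4 * k) * M := by
  intro t ht
  by_cases h0 : 0 ≤ t
  · exact zonal_ode_half k M hk F hF hG t ⟨h0, ht.2⟩
  have h1 : deriv (fun t => F (-t)) = fun t => - deriv F (-t) := by ext x; exact deriv_comp_neg F x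
  have h2 : deriv (fun t => - deriv F (-t)) = fun t => deriv (deriv F) (-t) := by
    ext x
    rw [deriv.fun_neg, deriv_comp_neg (deriv F) x, neg_neg]
  have := zonal_ode_half k M hk (fun t => F (-t)) (hF.comp contDiff_neg) (by
    intro s hs
    have := hG (-s) ⟨by linarith [hs.2], by linarith [hs.1]⟩
    rw [h1, h2]
    convert this using 2
    ring) (-t) ⟨by linarith, by linarith [ht.1]⟩
  rw [h1, h2] at this
  simp only [neg_neg, neg_zero, neg_sq] at this
  refine ⟨this.1, ?_, ?_⟩
  · convert this.2.1 using 2; ring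
  · rw [← abs_neg]; convert this.2.2 using 2; ring

lemma zonal_hasFDerivAt_inner {n : ℕ} (e x : Eucl n) :
    HasFDerivAt (fun x : Eucl n => ⟪x, e⟫) (innerSL ℝ e) x := by
  have := (innerSL ℝ e).hasFDerivAt (x := x)
  refine this.congr_of_eventuallyEq (Filter.Eventually.of_forall fun y => ?_)
  simp [real_inner_comm]

lemma zonal_hasFDerivAt_inv_norm {n : ℕ} (x : Eucl n) (hx : x ≠ 0) :
    HasFDerivAt (fun x : Eucl n => ‖x‖⁻¹) ((-(‖x‖⁻¹)^3) • innerSL ℝ x) x := by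
  have hx' : 0 < ‖x‖ := norm_pos_iff.2 hx
  have h1 := ((hasStrictFDerivAt_norm_sq x).hasFDerivAt).sqrt (by positivity)
  have h2 : HasFDerivAt (fun x : Eucl n => ‖x‖) (‖x‖⁻¹ • innerSL ℝ x) x := by
    have := h1.congr_of_eventuallyEq (f₁ := fun x : Eucl n => ‖x‖)
      (Filter.Eventually.of_forall fun y => (Real.sqrt_sq (norm_nonneg y)).symm)
    refine this.congr_fderiv ?_
    ext v
    simp [Real.sqrt_sq hx'.le]
    field_simp
  refine ((hasDerivAt_inv hx'.ne').comp_hasFDerivAt x h2).congr_fderiv ?_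
  ext v
  simp
  field_simp

lemma zonal_fderiv {n : ℕ} (e : Eucl n) (F : ℝ → ℝ) (hF : ContDiff ℝ 2 F) (x : Eucl n)
    (hx : x ≠ 0) :
    HasFDerivAt (sphereExt (fun x : Eucl n => F ⟪x, e⟫))
      (deriv F (‖x‖⁻¹ * ⟪x, e⟫) • (‖x‖⁻¹ • innerSL ℝ e - ((‖x‖⁻¹)^3 * ⟪x, e⟫) • innerSL ℝ x)) x := by
  have h1 := (zonal_hasFDerivAt_inv_norm x hx).mul (zonal_hasFDerivAt_inner e x)
  have h2 := (((hF.differentiable (by norm_num)) (‖x‖⁻¹ * ⟪x, e⟫)).hasDerivAt).comp_hasFDerivAt x h1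
  have h3 : sphereExt (fun x : Eucl n => F ⟪x, e⟫) = F ∘ (fun x : Eucl n => ‖x‖⁻¹ * ⟪x, e⟫) := by
    ext y
    simp [sphereExt, real_inner_smul_left]
  rw [h3]
  refine h2.congr_fderiv ?_
  ext v
  simp
  ring_nf

lemma zonal_hess {n : ℕ} (e : Eucl n) (F : ℝ → ℝ) (hF : ContDiff ℝ 2 F) (u : Eucl n)
    (hu : ‖u‖ = 1) (m : Fin 2 → Eucl n) :
    iteratedFDeriv ℝ 2 (sphereExt (fun x : Eucl n => F ⟪x, e⟫)) u m =
      deriv (deriv F) ⟪u, e⟫ * (⟪m 0, e⟫ - ⟪u, e⟫ * ⟪m 0, u⟫) * (⟪m 1, e⟫ - ⟪u, e⟫ * ⟪m 1, u⟫)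
      + deriv F ⟪u, e⟫ * (-⟪m 0, u⟫ * ⟪m 1, e⟫ - ⟪m 0, m 1⟫ * ⟪u, e⟫ - ⟪m 1, u⟫ * ⟪m 0, e⟫
          + 3 * ⟪m 0, u⟫ * ⟪m 1, u⟫ * ⟪u, e⟫) := by
  rw [iteratedFDeriv_two_apply]
  have hu0 : u ≠ 0 := by rintro rfl; simp at hu
  have hdF : ContDiff ℝ 1 (deriv F) := by
    have : ContDiff ℝ (1+1) F := by convert hF using 1; norm_num
    exact (contDiff_succ_iff_deriv.1 this).2.2
  have hev : fderiv ℝ (sphereExt (fun x : Eucl n => F ⟪x, e⟫)) =ᶠ[nhds u] fun x =>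
      (deriv F (‖x‖⁻¹ * ⟪x, e⟫) • (‖x‖⁻¹ • innerSL ℝ e - ((‖x‖⁻¹)^3 * ⟪x, e⟫) • innerSL ℝ x)) := by
    filter_upwards [isOpen_ne.mem_nhds hu0] with x hx
    exact (zonal_fderiv e F hF x hx).fderiv
  rw [hev.fderiv_eq]
  have hr := zonal_hasFDerivAt_inv_norm u hu0
  have he := zonal_hasFDerivAt_inner e u
  have h1 := hr.mul he
  have h2 := (((hdF.differentiable (by norm_num)) (‖u‖⁻¹ * ⟪u, e⟫)).hasDerivAt).comp_hasFDerivAt u h1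
  have hsl : HasFDerivAt (fun x : Eucl n => innerSL ℝ x) (innerSL ℝ : Eucl n →L[ℝ] Eucl n →L[ℝ] ℝ) u :=
    (innerSL ℝ : Eucl n →L[ℝ] Eucl n →L[ℝ] ℝ).hasFDerivAt
  have h3 := h2.smul ((hr.smul (hasFDerivAt_const (innerSL ℝ e) u)).sub
    (((hr.pow 3).mul he).smul hsl))
  have h4 := h3.fderiv
  refine (congrArg (fun L => (L (m 0)) (m 1)) h4).trans ?_
  have hi : ∀ a b : Eucl n, (innerSL ℝ : Eucl n →L[ℝ] Eucl n →L[ℝ] ℝ) a b = ⟪a, b⟫ := fun _ _ => rfl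
  simp [hu, real_inner_comm]
  erw [hi]
  ring

lemma zonal_sum_inner {n : ℕ} (a b : Eucl n) :
    ∑ i, ⟪EuclideanSpace.single i (1:ℝ), a⟫ * ⟪EuclideanSpace.single i (1:ℝ), b⟫ = ⟪a, b⟫ := by
  simp [PiLp.inner_apply, mul_comm]

lemma zonal_lap {n : ℕ} (e : Eucl n) (he : ‖e‖ = 1) (F : ℝ → ℝ) (hF : ContDiff ℝ 2 F) (u : Eucl n)
    (hu : ‖u‖ = 1) :
    sLap n (fun x => F ⟪x, e⟫) u =
      (1 - ⟪u, e⟫^2) * deriv (deriv F) ⟪u, e⟫ - ((n:ℝ) - 1) * ⟪u, e⟫ * deriv F ⟪u, e⟫ := by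
  unfold sLap
  simp only [zonal_hess e F hF u hu]
  have hee : ⟪e, e⟫ = 1 := by simp [he]
  have huu : ⟪u, u⟫ = 1 := by simp [hu]
  set t := ⟪u, e⟫ with ht
  set A := deriv (deriv F) t
  set B := deriv F t
  have e1 := zonal_sum_inner e e
  have e2 := zonal_sum_inner u u
  have e3 := zonal_sum_inner u e
  have hs : ∀ i : Fin n, ⟪EuclideanSpace.single i (1:ℝ), EuclideanSpace.single i (1:ℝ)⟫ = 1 := by
    intro i; simp
  calc _ = ∑ i : Fin n, (A * (⟪EuclideanSpace.single i (1:ℝ), e⟫ * ⟪EuclideanSpace.single i (1:ℝ), e⟫)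
        + (-2 * A * t - 2 * B) * (⟪EuclideanSpace.single i (1:ℝ), u⟫ * ⟪EuclideanSpace.single i (1:ℝ), e⟫)
        + (A * t^2 + 3 * B * t) * (⟪EuclideanSpace.single i (1:ℝ), u⟫ * ⟪EuclideanSpace.single i (1:ℝ), u⟫)
        + (- (B * t))) := by
        refine Finset.sum_congr rfl fun i _ => ?_
        rw [hs i]; ring
    _ = _ := by
        simp only [Finset.sum_add_distrib, ← Finset.mul_sum, e1, e2, e3, hee, huu, ← ht]
        simp
        ring

lemma zonal_grad_le {n : ℕ} (e : Eucl n) (he : ‖e‖ = 1) (F : ℝ → ℝ) (hF : ContDiff ℝ 2 F)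
    (u : Eucl n) (hu : ‖u‖ = 1) :
    Real.sqrt (sGradNormSq n (fun x => F ⟪x, e⟫) u) ≤ 2 * |deriv F ⟪u, e⟫| := by
  unfold sGradNormSq
  rw [Real.sqrt_sq (norm_nonneg _)]
  have hu0 : u ≠ 0 := by rintro rfl; simp at hu
  have h1 : ‖gradient (sphereExt (fun x : Eucl n => F ⟪x, e⟫)) u‖
      = ‖fderiv ℝ (sphereExt (fun x : Eucl n => F ⟪x, e⟫)) u‖ := by
    simp [gradient]
  rw [h1, (zonal_fderiv e F hF u hu0).fderiv, norm_smul, Real.norm_eq_abs]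
  simp only [hu, inv_one, one_mul, one_smul, one_pow]
  rw [mul_comm]
  gcongr
  refine (norm_sub_le _ _).trans ?_
  rw [norm_smul, innerSL_apply_norm, innerSL_apply_norm, he, hu]
  have := norm_inner_le_norm (𝕜 := ℝ) u e
  rw [he, hu] at this
  linarith

lemma zonal_hess_le {n : ℕ} (e : Eucl n) (he : ‖e‖ = 1) (F : ℝ → ℝ) (hF : ContDiff ℝ 2 F)
    (u : Eucl n) (hu : ‖u‖ = 1) :
    Real.sqrt (sHessNormSq n (fun x => F ⟪x, e⟫) u) ≤
      n * ((1 - ⟪u, e⟫^2) * |deriv (deriv F) ⟪u, e⟫| + |deriv F ⟪u, e⟫|) := by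
  have huu : ⟪u, u⟫ = 1 := by simp [hu]
  have hee : ⟪e, e⟫ = 1 := by simp [he]
  set t := ⟪u, e⟫ with ht
  have htabs : |t| ≤ 1 := by
    have := norm_inner_le_norm (𝕜 := ℝ) u e
    rw [he, hu] at this
    simpa using this
  have ht2 : 0 ≤ 1 - t^2 := by nlinarith [abs_le.1 htabs]
  set B := (1 - t^2) * |deriv (deriv F) t| + |deriv F t| with hB
  have hB0 : 0 ≤ B := by positivity
  -- facts on the tangential projection
  have hp1 : ∀ v : Eucl n, ⟪tanProj u v, u⟫ = 0 := by
    intro v; simp [tanProj, inner_sub_left, real_inner_smul_left, hu]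
  have hp2 : ∀ v : Eucl n, ‖v‖ = 1 → ‖tanProj u v‖ ^ 2 = 1 - ⟪v, u⟫^2 := by
    intro v hv
    rw [← real_inner_self_eq_norm_sq]
    have hvv : ⟪v, v⟫ = 1 := by simp [hv]
    simp only [tanProj, inner_sub_left, inner_sub_right, real_inner_smul_left,
      real_inner_smul_right, huu, hvv, real_inner_comm u v]
    rw [real_inner_comm v u]
    ring
  have hp3 : ∀ v : Eucl n, ⟪tanProj u v, e⟫ = ⟪v, tanProj u e⟫ := by
    intro v
    simp only [tanProj, inner_sub_left, inner_sub_right, real_inner_smul_left,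
      real_inner_smul_right, ← ht]
    rw [real_inner_comm u e, ← ht]; ring
  have hpe : ‖tanProj u e‖ ^ 2 = 1 - t^2 := by
    rw [hp2 e he, real_inner_comm, ← ht]
  have hent : ∀ i j : Fin n, |iteratedFDeriv ℝ 2 (sphereExt (fun x : Eucl n => F ⟪x, e⟫)) u
      ![tanProj u (EuclideanSpace.single i 1), tanProj u (EuclideanSpace.single j 1)]| ≤ B := by
    intro i j
    rw [zonal_hess e F hF u hu]
    simp only [Matrix.cons_val_zero, Matrix.cons_val_one, hp1, ← ht]
    have hsn : ∀ i : Fin n, ‖(EuclideanSpace.single i (1:ℝ) : Eucl n)‖ = 1 := by intro i; simp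
    have hpn : ∀ i : Fin n, ‖tanProj u (EuclideanSpace.single i (1:ℝ) : Eucl n)‖ ≤ 1 := by
      intro i
      have := hp2 _ (hsn i)
      nlinarith [sq_nonneg ⟪(EuclideanSpace.single i (1:ℝ) : Eucl n), u⟫, norm_nonneg (tanProj u (EuclideanSpace.single i (1:ℝ) : Eucl n))]
    have ha : ∀ i : Fin n, |⟪tanProj u (EuclideanSpace.single i (1:ℝ) : Eucl n), e⟫| ≤ ‖tanProj u e‖ := by
      intro i
      rw [hp3]
      have := norm_inner_le_norm (𝕜 := ℝ) (EuclideanSpace.single i (1:ℝ) : Eucl n) (tanProj u e)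
      rw [hsn i, one_mul] at this
      exact this
    have hb : |⟪tanProj u (EuclideanSpace.single i (1:ℝ) : Eucl n), tanProj u (EuclideanSpace.single j (1:ℝ) : Eucl n)⟫| ≤ 1 := by
      have := norm_inner_le_norm (𝕜 := ℝ) (tanProj u (EuclideanSpace.single i (1:ℝ) : Eucl n)) (tanProj u (EuclideanSpace.single j (1:ℝ) : Eucl n))
      exact this.trans (mul_le_one₀ (hpn i) (norm_nonneg _) (hpn j))
    have hai := ha i
    have haj := ha j
    generalize ⟪tanProj u (EuclideanSpace.single i (1:ℝ) : Eucl n), e⟫ = a at *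
    generalize ⟪tanProj u (EuclideanSpace.single j (1:ℝ) : Eucl n), e⟫ = a' at *
    generalize ⟪tanProj u (EuclideanSpace.single i (1:ℝ) : Eucl n), tanProj u (EuclideanSpace.single j (1:ℝ) : Eucl n)⟫ = b at *
    have e1 : deriv (deriv F) t * (a - t * 0) * (a' - t * 0) + deriv F t * (-0 * a' - b * t - 0 * a + 3 * 0 * 0 * t)
      = (a * a') * deriv (deriv F) t + -(b * t) * deriv F t := by ring
    rw [e1]
    refine (abs_add_le _ _).trans ?_
    rw [abs_mul, abs_mul a, abs_mul, abs_neg, abs_mul b]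
    refine add_le_add ?_ ?_
    · rw [← hpe, pow_two]
      gcongr
    · exact mul_le_of_le_one_left (abs_nonneg _) (mul_le_one₀ hb (abs_nonneg _) htabs)
  rw [show (n:ℝ) * B = Real.sqrt ((n * B)^2) from (Real.sqrt_sq (by positivity)).symm]
  apply Real.sqrt_le_sqrt
  unfold sHessNormSq
  calc _ ≤ ∑ i : Fin n, ∑ j : Fin n, B^2 := by
        refine Finset.sum_le_sum fun i _ => Finset.sum_le_sum fun j _ => ?_
        exact sq_le_sq' (abs_le.1 (hent i j)).1 (abs_le.1 (hent i j)).2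
    _ = _ := by simp; ring

lemma zonal_finrank {n : ℕ} (hn : 1 ≤ n) (e : Eucl n) (he : ‖e‖ = 1) :
    ((Module.finrank ℝ (Submodule.span ℝ {e})ᗮ : ℕ) : ℝ) = (n:ℝ) - 1 := by
  have : Fact (Module.finrank ℝ (Eucl n) = (n - 1) + 1) := ⟨by simp; omega⟩
  have he0 : e ≠ 0 := by rintro rfl; simp at he
  rw [Submodule.finrank_orthogonal_span_singleton (n := n - 1) he0]
  push_cast [hn]; ring

lemma zonal_sphere_finite {n : ℕ} (hn : 1 ≤ n) (e : Eucl n) (he : ‖e‖ = 1) :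
    μH[(n:ℝ) - 1] (Metric.sphere (0 : Eucl n) 1) < ⊤ := by
  rw [← zonal_finrank hn e he]
  set V := (Submodule.span ℝ {e})ᗮ with hV
  set d : ℝ := (Module.finrank ℝ V : ℝ) with hd
  have hd0 : 0 ≤ d := by positivity
  set g : V → Eucl n := fun w => stereoInvFunAux e (w : Eucl n) with hg
  have hgc : ContDiff ℝ 1 g := contDiff_stereoInvFunAux.comp V.subtypeL.contDiff
  obtain ⟨K, hK⟩ := hgc.contDiffOn.exists_lipschitzOnWith (s := Metric.closedBall (0:V) 2)
    (by norm_num) (convex_closedBall _ _) (isCompact_closedBall _ _)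
  have hT : μH[d] (g '' Metric.closedBall (0:V) 2) < ⊤ := by
    refine (hK.hausdorffMeasure_image_le hd0).trans_lt ?_
    refine ENNReal.mul_lt_top (ENNReal.rpow_lt_top_of_nonneg hd0 ENNReal.coe_ne_top) ?_
    exact (isCompact_closedBall (0:V) 2).measure_lt_top
  have hT' : μH[d] ((fun x : Eucl n => -x) '' (g '' Metric.closedBall (0:V) 2)) < ⊤ := by
    have hiso : Isometry (fun x : Eucl n => -x) := (IsometryEquiv.neg (Eucl n)).isometry
    rw [hiso.hausdorffMeasure_image (Or.inl hd0)]
    exact hT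
  have hlow : ∀ x : Eucl n, ‖x‖ = 1 → ⟪x, e⟫ ≤ 0 → x ∈ g '' Metric.closedBall (0:V) 2 := by
    intro x hx hxe
    have hne : x ≠ e := by
      rintro rfl
      simp [hx] at hxe
      linarith
    have hx' : x ∈ Metric.sphere (0 : Eucl n) 1 := by simpa using hx
    have h1 := stereo_left_inv he (x := ⟨x, hx'⟩) hne
    set w := stereoToFun e x with hw
    have h2 : stereoInvFunAux e (w : Eucl n) = x := congrArg Subtype.val h1
    refine ⟨w, ?_, h2⟩
    have hwe : ⟪(w : Eucl n), e⟫ = 0 := (Submodule.mem_orthogonal_singleton_iff_inner_left).1 w.2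
    rw [← h2, stereoInvFunAux_apply, real_inner_smul_left, inner_add_left, real_inner_smul_left,
      real_inner_smul_left, hwe, real_inner_self_eq_norm_sq, he] at hxe
    have hp : 0 < (‖(w : Eucl n)‖^2 + 4)⁻¹ := by positivity
    have h3 : ‖(w : Eucl n)‖^2 - 4 ≤ 0 := by
      by_contra hcon
      push Not at hcon
      have : 0 < (‖(w : Eucl n)‖^2 + 4)⁻¹ * (4 * 0 + (‖(w : Eucl n)‖^2 - 4) * 1 ^ 2) := by
        apply mul_pos hp; linarith
      linarith
    rw [mem_closedBall_zero_iff]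
    change ‖(w : Eucl n)‖ ≤ 2
    nlinarith [norm_nonneg (w : Eucl n)]
  refine (measure_mono (t := g '' Metric.closedBall (0:V) 2 ∪
    ((fun x : Eucl n => -x) '' (g '' Metric.closedBall (0:V) 2))) ?_).trans_lt
    ((measure_union_le _ _).trans_lt (ENNReal.add_lt_top.2 ⟨hT, hT'⟩))
  intro x hx
  rw [mem_sphere_zero_iff_norm] at hx
  rcases le_total ⟪x, e⟫ 0 with h | h
  · exact Or.inl (hlow x hx h)
  · exact Or.inr ⟨-x, hlow (-x) (by simpa using hx) (by simpa using h), by simp⟩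

lemma zonal_cap_pos {n : ℕ} (hn : 1 ≤ n) (e : Eucl n) (he : ‖e‖ = 1) :
    0 < μH[(n:ℝ) - 1] (Function.support (fun u : Eucl n => ⟪u, e⟫ ^ 2) ∩ Metric.sphere (0 : Eucl n) 1) := by
  rw [← zonal_finrank hn e he]
  set V := (Submodule.span ℝ {e})ᗮ with hV
  set d : ℝ := (Module.finrank ℝ V : ℝ) with hd
  have hd0 : 0 ≤ d := by positivity
  refine lt_of_lt_of_le ?_ (hausdorffMeasure_orthogonalProjectionOnto_le V d _ hd0)
  have hb : 0 < μH[d] (Metric.ball (0:V) 1) := Metric.isOpen_ball.measure_pos _ ⟨0, by simp⟩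
  refine hb.trans_le (measure_mono ?_)
  intro y hy
  rw [mem_ball_zero_iff] at hy
  have hy' : ‖(y : Eucl n)‖ < 1 := hy
  have hye : ⟪(y : Eucl n), e⟫ = 0 := (Submodule.mem_orthogonal_singleton_iff_inner_left).1 y.2
  have hpos : 0 < 1 - ‖(y : Eucl n)‖^2 := by nlinarith [norm_nonneg (y : Eucl n)]
  have hs := Real.sq_sqrt hpos.le
  have hs0 := Real.sqrt_pos.2 hpos
  set s := Real.sqrt (1 - ‖(y : Eucl n)‖^2)
  refine ⟨(y : Eucl n) + s • e, ⟨?_, ?_⟩, ?_⟩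
  · simp only [Function.mem_support]
    rw [inner_add_left, real_inner_smul_left, hye, real_inner_self_eq_norm_sq, he]
    have : 0 < (0 + s * 1^2)^2 := by positivity
    exact this.ne'
  · rw [mem_sphere_zero_iff_norm]
    have : ‖(y : Eucl n) + s • e‖ ^ 2 = 1 := by
      rw [norm_add_sq_real, real_inner_smul_right, hye, norm_smul, he, mul_one, Real.norm_eq_abs,
        sq_abs, hs]
      ring
    exact (pow_eq_one_iff_of_nonneg (norm_nonneg _) two_ne_zero).1 this
  · rw [map_add, map_smul]
    have h1 : V.orthogonalProjectionOnto e = 0 := by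
      rw [Submodule.orthogonalProjectionOnto_eq_zero_iff]
      exact Submodule.le_orthogonal_orthogonal _ (Submodule.mem_span_singleton_self e)
    rw [h1]
    simp

/-- Bound on the degree one coefficient from the orthogonality relation. -/
lemma zonal_coeff {n : ℕ} (hn : 1 ≤ n) (e : Eucl n) (he : ‖e‖ = 1) :
    ∃ c : ℝ, 0 ≤ c ∧ ∀ F : ℝ → ℝ, Continuous F → ∀ A R : ℝ,
      (∫ u in Metric.sphere (0 : Eucl n) 1, F ⟪u, e⟫ * ⟪e, u⟫ ∂μH[(n : ℝ) - 1]) = 0 →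
      (∀ t ∈ Set.Icc (-1:ℝ) 1, |F t - t * A| ≤ R) → |A| ≤ c * R := by
  set S := Metric.sphere (0 : Eucl n) 1
  set μ : Measure (Eucl n) := (μH[(n : ℝ) - 1]).restrict S with hμ
  have hfin : IsFiniteMeasure μ := ⟨by
    rw [hμ, Measure.restrict_apply_univ]; exact zonal_sphere_finite hn e he⟩
  have hintg : ∀ g : Eucl n → ℝ, Continuous g → Integrable g μ := by
    intro g hg
    have : IsCompact S := isCompact_sphere _ _
    exact hg.continuousOn.integrableOn_of_subset_isCompact this
      Metric.isClosed_sphere.measurableSet subset_rfl (zonal_sphere_finite hn e he).ne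
  have hce : Continuous fun u : Eucl n => ⟪u, e⟫ := by fun_prop
  set I := ∫ u, ⟪u, e⟫^2 ∂μ with hI
  have hIpos : 0 < I := by
    rw [hI, hμ, setIntegral_pos_iff_support_of_nonneg_ae]
    · exact zonal_cap_pos hn e he
    · exact Filter.Eventually.of_forall fun u => sq_nonneg _
    · exact hintg _ (hce.pow 2)
  refine ⟨μ.real Set.univ / I, by positivity, ?_⟩
  intro F hF A R h0 hR
  have h1 : ∫ u, (F ⟪u, e⟫ - ⟪u, e⟫ * A) * ⟪u, e⟫ ∂μ = - (A * I) := by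
    have e1 : ∀ u : Eucl n, (F ⟪u, e⟫ - ⟪u, e⟫ * A) * ⟪u, e⟫ = F ⟪u, e⟫ * ⟪e, u⟫ - A * ⟪u, e⟫^2 := by
      intro u; rw [real_inner_comm u e]; ring
    simp only [e1]
    rw [integral_sub, integral_const_mul, h0, ← hI, zero_sub]
    · exact hintg _ ((hF.comp hce).mul (by fun_prop))
    · exact (hintg _ (hce.pow 2)).const_mul A
  have h2 : ‖∫ u, (F ⟪u, e⟫ - ⟪u, e⟫ * A) * ⟪u, e⟫ ∂μ‖ ≤ R * μ.real Set.univ := by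
    apply norm_integral_le_of_norm_le_const
    rw [hμ]
    refine (ae_restrict_iff' Metric.isClosed_sphere.measurableSet).2 (Filter.Eventually.of_forall ?_)
    intro u hu
    have hu1 : ‖u‖ = 1 := by simpa [S] using hu
    have h3 : |⟪u, e⟫| ≤ 1 := by
      have := norm_inner_le_norm (𝕜 := ℝ) u e
      rw [he, hu1] at this
      simpa using this
    have h4 := hR ⟪u, e⟫ ⟨(abs_le.1 h3).1, (abs_le.1 h3).2⟩
    rw [norm_mul, Real.norm_eq_abs, Real.norm_eq_abs]
    exact (mul_le_of_le_one_right (abs_nonneg _) h3).trans h4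
  rw [h1, norm_neg, norm_mul, Real.norm_eq_abs, Real.norm_eq_abs, abs_of_pos hIpos] at h2
  rw [div_mul_eq_mul_div, le_div_iff₀ hIpos]
  linarith

lemma zonal_range {n : ℕ} (hn : 2 ≤ n) (e : Eucl n) (he : ‖e‖ = 1) (t : ℝ)
    (ht : t ∈ Set.Icc (-1:ℝ) 1) : ∃ u : Eucl n, ‖u‖ = 1 ∧ ⟪u, e⟫ = t := by
  have hfr := zonal_finrank (by omega) e he
  have : Nontrivial (Submodule.span ℝ {e})ᗮ := by
    apply Module.nontrivial_of_finrank_pos (R := ℝ)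
    have : (2:ℝ) ≤ n := by exact_mod_cast hn
    have : (0:ℝ) < (Module.finrank ℝ (Submodule.span ℝ {e})ᗮ : ℕ) := by linarith
    exact_mod_cast this
  obtain ⟨y, hy⟩ := exists_norm_eq (Submodule.span ℝ {e})ᗮ (c := Real.sqrt (1 - t^2)) (Real.sqrt_nonneg _)
  have hy' : ‖(y : Eucl n)‖ = Real.sqrt (1 - t^2) := hy
  have hye : ⟪(y : Eucl n), e⟫ = 0 := (Submodule.mem_orthogonal_singleton_iff_inner_left).1 y.2
  refine ⟨(y : Eucl n) + t • e, ?_, ?_⟩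
  · have : ‖(y : Eucl n) + t • e‖ ^ 2 = 1 := by
      rw [norm_add_sq_real, real_inner_smul_right, hye, norm_smul, he, mul_one, Real.norm_eq_abs,
        sq_abs, hy', Real.sq_sqrt (by nlinarith [ht.1, ht.2])]
      ring
    exact (pow_eq_one_iff_of_nonneg (norm_nonneg _) two_ne_zero).1 this
  · rw [inner_add_left, real_inner_smul_left, hye, real_inner_self_eq_norm_sq, he]; ring

/-- there is a constant `C = C(n) > 0` such that
`‖f‖_{C²} ≤ C ‖f + (n-1)⁻¹ Δ_S f‖_{C⁰}` for every SO(n-1) invariant (zonal) C²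
function `f(u) = F(⟪u,ē⟫)` on `S^{n-1}` with vanishing degree-one spherical
harmonic projection (`π₁ f = 0`). -/
theorem box_C2_estimate_zonal (n : ℕ) (hn : 3 ≤ n) (e : Eucl n) (he : ‖e‖ = 1) :
    ∃ C : ℝ, 0 < C ∧ ∀ F : ℝ → ℝ, ContDiff ℝ 2 F →
      (∀ x : Eucl n,
        (∫ u in Metric.sphere (0 : Eucl n) 1, F ⟪u, e⟫ * ⟪x, u⟫ ∂μH[(n : ℝ) - 1]) = 0) →
      C2norm n (fun x => F ⟪x, e⟫) ≤
        C * ⨆ u : Metric.sphere (0 : Eucl n) 1,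
          |F ⟪(u : Eucl n), e⟫ + (1 / ((n : ℝ) - 1)) * sLap n (fun x => F ⟪x, e⟫) u| := by
  obtain ⟨c, hc0, hc⟩ := zonal_coeff (by omega) e he
  have hn' : (3:ℝ) ≤ n := by exact_mod_cast hn
  set k : ℝ := (n:ℝ) - 1 with hk
  have hk1 : 1 ≤ k := by linarith
  set K : ℝ := 10 + 4 * k with hK
  have hK0 : 0 < K := by linarith
  set L : ℝ := K + c * K with hL
  have hL0 : 0 < L := by positivity
  refine ⟨L + 2 * L + n * (2 * k + L), by positivity, ?_⟩
  intro F hF horth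
  have hdF : ContDiff ℝ 1 (deriv F) := by
    have : ContDiff ℝ (1+1) F := by convert hF using 1; norm_num
    exact (contDiff_succ_iff_deriv.1 this).2.2
  have hc2 : Continuous (deriv (deriv F)) := hdF.continuous_deriv (by norm_num)
  have hc1 : Continuous (deriv F) := hdF.continuous
  have hc0' : Continuous F := hF.continuous
  set G : ℝ → ℝ := fun t => F t + 1 / k * ((1 - t^2) * deriv (deriv F) t - k * t * deriv F t) with hG
  have hGc : Continuous G := by fun_prop
  have hn1 : ∀ u : Metric.sphere (0 : Eucl n) 1, ‖(u : Eucl n)‖ = 1 := fun u => by simp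
  have htm : ∀ u : Metric.sphere (0 : Eucl n) 1, ⟪(u : Eucl n), e⟫ ∈ Set.Icc (-1:ℝ) 1 := by
    intro u
    have := norm_inner_le_norm (𝕜 := ℝ) (u : Eucl n) e
    rw [he, hn1 u, one_mul, Real.norm_eq_abs] at this
    exact abs_le.1 this
  have hGu : ∀ u : Metric.sphere (0 : Eucl n) 1,
      |F ⟪(u : Eucl n), e⟫ + (1 / k) * sLap n (fun x => F ⟪x, e⟫) u| = |G ⟪(u : Eucl n), e⟫| := by
    intro u
    rw [zonal_lap e he F hF u (hn1 u)]
  simp only [hGu]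
  set M := ⨆ u : Metric.sphere (0 : Eucl n) 1, |G ⟪(u : Eucl n), e⟫| with hM
  have hbdd : BddAbove (Set.range fun u : Metric.sphere (0 : Eucl n) 1 => |G ⟪(u : Eucl n), e⟫|) := by
    obtain ⟨b, hb⟩ := (isCompact_Icc (a := (-1:ℝ)) (b := 1)).exists_bound_of_continuousOn hGc.continuousOn
    refine ⟨b, ?_⟩
    rintro _ ⟨u, rfl⟩
    exact hb _ (htm u)
  have hGM : ∀ t ∈ Set.Icc (-1:ℝ) 1, |G t| ≤ M := by
    intro t ht
    obtain ⟨u, hu, hut⟩ := zonal_range (by omega) e he t ht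
    have := le_ciSup hbdd ⟨u, by simpa using hu⟩
    simpa [hut] using this
  have hM0 : 0 ≤ M := (abs_nonneg _).trans (hGM 0 (by norm_num))
  have hode := zonal_ode k M hk1 F hF hGM
  have hA := hc F hc0' (deriv F 0) (K * M) (horth e) (fun t ht => (hode t ht).2.1)
  have hF0 : ∀ t ∈ Set.Icc (-1:ℝ) 1, |F t| ≤ L * M := by
    intro t ht
    have h1 := (hode t ht).2.1
    have h2 : |t * deriv F 0| ≤ |deriv F 0| := by
      rw [abs_mul]
      exact mul_le_of_le_one_left (abs_nonneg _) (abs_le.2 ht)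
    have h3 := abs_add_le (F t - t * deriv F 0) (t * deriv F 0)
    rw [sub_add_cancel] at h3
    rw [hL]; linarith
  have hF1 : ∀ t ∈ Set.Icc (-1:ℝ) 1, |deriv F t| ≤ L * M := by
    intro t ht
    have h1 := (hode t ht).2.2
    have h3 := abs_add_le (deriv F t - deriv F 0) (deriv F 0)
    rw [sub_add_cancel] at h3
    rw [hL]; linarith
  have hLM : 0 ≤ L * M := by positivity
  have b1 : (⨆ u : Metric.sphere (0 : Eucl n) 1, |F ⟪(u : Eucl n), e⟫|) ≤ L * M :=
    Real.iSup_le (fun u => hF0 _ (htm u)) hLM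
  have b2 : (⨆ u : Metric.sphere (0 : Eucl n) 1,
      Real.sqrt (sGradNormSq n (fun x => F ⟪x, e⟫) u)) ≤ 2 * (L * M) :=
    Real.iSup_le (fun u => (zonal_grad_le e he F hF u (hn1 u)).trans
      (by linarith [hF1 _ (htm u)])) (by positivity)
  have b3 : (⨆ u : Metric.sphere (0 : Eucl n) 1,
      Real.sqrt (sHessNormSq n (fun x => F ⟪x, e⟫) u)) ≤ n * (2 * k * M + L * M) :=
    Real.iSup_le (fun u => (zonal_hess_le e he F hF u (hn1 u)).trans (by
      have h1 := (hode _ (htm u)).1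
      have h2 := hF1 _ (htm u)
      gcongr)) (by positivity)
  unfold C2norm
  calc _ ≤ L * M + 2 * (L * M) + n * (2 * k * M + L * M) := add_le_add (add_le_add b1 b2) b3
    _ = _ := by ring
end
end

section
/- Let μ be a finite signed zonal Borel measure on S^{n-1}, identified via cylindrical coordinates with a measure on [−1,1], and let σ be a finite signed Borel measure on S^{n-1}. Then for every k ∈ ℕ, the degree-k spherical harmonic component of the convolution σ ∗ μ equals a_k^n[μ] · π_k σ, where a_k^n[μ] = ω_{n−1} ∫_{−1}^{1} P_k^n(t)(1−t²)^{(n−3)/2} dμ(t) and P_k^n is the Legendre polynomial of dimension n and degree k. -/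
open scoped RealInnerProductSpace
open MeasureTheory

noncomputable section

/-- Integral of a function against a finite signed Borel measure, via the Jordan
decomposition. -/
def sint {α : Type*} [MeasurableSpace α] (s : SignedMeasure α) (f : α → ℝ) : ℝ :=
  (∫ x, f x ∂s.toJordanDecomposition.posPart) - ∫ x, f x ∂s.toJordanDecomposition.negPart

/-- A signed measure on `ℝⁿ` supported on the unit sphere. -/
def SphSupported {n : ℕ} (s : SignedMeasure (Eucl n)) : Prop :=
  ∀ A : Set (Eucl n), MeasurableSet A → A ⊆ (Metric.sphere (0 : Eucl n) 1)ᶜ → s A = 0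

/-- Surface area of the unit sphere in `ℝᵐ` (`ω_m` in the paper). -/
def ωS (m : ℕ) : ℝ := ((μH[(m : ℝ) - 1] : Measure (Eucl m)) (Metric.sphere 0 1)).toReal

/-- The Legendre polynomial `P_k^n` of dimension `n` and degree `k`, normalized by
`P_k^n(1) = 1`. -/
def legP (n : ℕ) : ℕ → ℝ → ℝ
  | 0 => fun _ => 1
  | 1 => fun t => t
  | (k+2) => fun t =>
      ((2 * (k : ℝ) + n) * t * legP n (k+1) t - ((k : ℝ) + 1) * legP n k t) / ((k : ℝ) + n - 1)

/-- The Euclidean Laplacian on `ℝⁿ`. -/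
def eLap (n : ℕ) (f : Eucl n → ℝ) (x : Eucl n) : ℝ :=
  ∑ i : Fin n, iteratedFDeriv ℝ 2 f x (fun _ => EuclideanSpace.single i 1)

/-! ### Measure-theoretic preliminaries -/

lemma sph_parts_null {n : ℕ} {s : SignedMeasure (Eucl n)} (hs : SphSupported s) :
    s.toJordanDecomposition.posPart (Metric.sphere (0 : Eucl n) 1)ᶜ = 0 ∧
    s.toJordanDecomposition.negPart (Metric.sphere (0 : Eucl n) 1)ᶜ = 0 := by
  have hS : MeasurableSet (Metric.sphere (0 : Eucl n) 1)ᶜ :=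
    Metric.isClosed_sphere.measurableSet.compl
  obtain ⟨i, hi, h1, h2, h3, h4⟩ := s.toJordanDecomposition_spec
  constructor
  · rw [h3, SignedMeasure.toMeasureOfZeroLE_apply _ _ hi hS]
    have := hs (i ∩ (Metric.sphere (0 : Eucl n) 1)ᶜ) (hi.inter hS) Set.inter_subset_right
    simp [this]
  · rw [h4, SignedMeasure.toMeasureOfLEZero_apply _ _ hi.compl hS]
    have := hs (iᶜ ∩ (Metric.sphere (0 : Eucl n) 1)ᶜ) (hi.compl.inter hS) Set.inter_subset_right
    simp [this]

lemma ae_sph {n : ℕ} {μ : Measure (Eucl n)} (h : μ (Metric.sphere (0 : Eucl n) 1)ᶜ = 0) :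
    ∀ᵐ x ∂μ, ‖x‖ = 1 := by
  rw [ae_iff]
  convert h using 2
  ext x
  simp

lemma integrable_sph {n : ℕ} {μ : Measure (Eucl n)} [IsFiniteMeasure μ]
    (h : μ (Metric.sphere (0 : Eucl n) 1)ᶜ = 0) {f : Eucl n → ℝ} (hf : Continuous f) :
    Integrable f μ := by
  obtain ⟨C, hC⟩ := (isCompact_sphere (0 : Eucl n) 1).exists_bound_of_continuousOn hf.continuousOn
  refine Integrable.of_bound hf.aestronglyMeasurable C ?_
  filter_upwards [ae_sph h] with x hx
  exact hC x (by simp [hx])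

lemma sint_congr_sph {n : ℕ} {s : SignedMeasure (Eucl n)} (hs : SphSupported s)
    {f g : Eucl n → ℝ} (h : ∀ x, ‖x‖ = 1 → f x = g x) : sint s f = sint s g := by
  unfold sint
  congr 1
  · apply integral_congr_ae
    filter_upwards [ae_sph (sph_parts_null hs).1] with x hx using h x hx
  · apply integral_congr_ae
    filter_upwards [ae_sph (sph_parts_null hs).2] with x hx using h x hx

lemma sint_smul {α : Type*} [MeasurableSpace α] (s : SignedMeasure α) (c : ℝ) (f : α → ℝ) :
    sint s (fun x => c * f x) = c * sint s f := by
  unfold sint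
  rw [integral_const_mul, integral_const_mul]
  ring

lemma sint_add {n : ℕ} {s : SignedMeasure (Eucl n)} (hs : SphSupported s)
    {f g : Eucl n → ℝ} (hf : Continuous f) (hg : Continuous g) :
    sint s (fun x => f x + g x) = sint s f + sint s g := by
  unfold sint
  have h := sph_parts_null hs
  rw [integral_add (integrable_sph h.1 hf) (integrable_sph h.1 hg),
    integral_add (integrable_sph h.2 hf) (integrable_sph h.2 hg)]
  ring

lemma sint_sum {n : ℕ} {s : SignedMeasure (Eucl n)} (hs : SphSupported s) {ι : Type*}
    (t : Finset ι) {f : ι → Eucl n → ℝ} (hf : ∀ i, Continuous (f i)) :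
    sint s (fun x => ∑ i ∈ t, f i x) = ∑ i ∈ t, sint s (f i) := by
  unfold sint
  have h := sph_parts_null hs
  rw [integral_finsetSum _ (fun i _ => integrable_sph h.1 (hf i)),
    integral_finsetSum _ (fun i _ => integrable_sph h.2 (hf i)), Finset.sum_sub_distrib]

lemma sint_map_inv {n : ℕ} {s : SignedMeasure (Eucl n)} (hs : SphSupported s)
    (g : Eucl n ≃ₗᵢ[ℝ] Eucl n) (hg : s.map g = s) {f : Eucl n → ℝ} (hf : Continuous f) :
    sint s (fun x => f (g x)) = sint s f := by
  have h := sph_parts_null hs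
  have hgm : Measurable g := g.continuous.measurable
  set P := s.toJordanDecomposition.posPart with hP
  set N := s.toJordanDecomposition.negPart with hN
  have key : P.map g + N = P + N.map g := by
    ext A hA
    have hgA : MeasurableSet (g ⁻¹' A) := hgm hA
    have e1 : s (g ⁻¹' A) = s A := by
      conv_rhs => rw [← hg]
      rw [VectorMeasure.map_apply _ hgm hA]
    rw [s.apply_eq_posPart_real_sub_negPart_real hA,
      s.apply_eq_posPart_real_sub_negPart_real hgA, ← hP, ← hN] at e1
    rw [Measure.add_apply, Measure.add_apply, Measure.map_apply hgm hA, Measure.map_apply hgm hA]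
    rw [← ENNReal.toReal_eq_toReal_iff' (by finiteness) (by finiteness),
      ENNReal.toReal_add (by finiteness) (by finiteness),
      ENNReal.toReal_add (by finiteness) (by finiteness)]
    simp only [Measure.real] at e1
    linarith
  have hfg : Continuous fun x => f (g x) := hf.comp g.continuous
  have i1 : Integrable f (P.map g) :=
    (integrable_map_measure hf.aestronglyMeasurable hgm.aemeasurable).2 (integrable_sph h.1 hfg)
  have i2 : Integrable f (N.map g) :=
    (integrable_map_measure hf.aestronglyMeasurable hgm.aemeasurable).2 (integrable_sph h.2 hfg)
  have e2 : ∫ x, f x ∂(P.map g + N) = ∫ x, f x ∂(P + N.map g) := by rw [key]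
  rw [integral_add_measure i1 (integrable_sph h.2 hf),
    integral_add_measure (integrable_sph h.1 hf) i2,
    integral_map hgm.aemeasurable hf.aestronglyMeasurable,
    integral_map hgm.aemeasurable hf.aestronglyMeasurable] at e2
  unfold sint
  rw [← hP, ← hN]
  linarith

/-! ### Rotations in a plane -/

/-- The generator of the rotation in the plane of `a`, `b`. -/
def gen {n : ℕ} (a b : Eucl n) (x : Eucl n) : Eucl n := ⟪x, a⟫ • b - ⟪x, b⟫ • a

/-- The rotation in the plane of `a`, `b`. -/
def rotF {n : ℕ} (a b : Eucl n) (θ : ℝ) (x : Eucl n) : Eucl n :=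
  x + (Real.cos θ - 1) • (⟪x, a⟫ • a + ⟪x, b⟫ • b) + Real.sin θ • gen a b x

lemma rotF_add {n : ℕ} {a b : Eucl n} (ha : ‖a‖ = 1) (hb : ‖b‖ = 1) (hab : ⟪a, b⟫ = 0)
    (θ φ : ℝ) (x : Eucl n) : rotF a b θ (rotF a b φ x) = rotF a b (θ + φ) x := by
  have haa : ⟪a, a⟫ = (1 : ℝ) := by rw [real_inner_self_eq_norm_sq, ha]; norm_num
  have hbb : ⟪b, b⟫ = (1 : ℝ) := by rw [real_inner_self_eq_norm_sq, hb]; norm_num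
  have hba : ⟪b, a⟫ = (0 : ℝ) := by rw [real_inner_comm]; exact hab
  have h1 : ⟪rotF a b φ x, a⟫ = Real.cos φ * ⟪x, a⟫ - Real.sin φ * ⟪x, b⟫ := by
    simp only [rotF, gen, inner_add_left, inner_sub_left, real_inner_smul_left, haa, hba]; ring
  have h2 : ⟪rotF a b φ x, b⟫ = Real.cos φ * ⟪x, b⟫ + Real.sin φ * ⟪x, a⟫ := by
    simp only [rotF, gen, inner_add_left, inner_sub_left, real_inner_smul_left, hbb, hab]; ring
  rw [rotF, gen, h1, h2, rotF, rotF, gen, Real.cos_add, Real.sin_add]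
  module

lemma rotF_norm {n : ℕ} {a b : Eucl n} (ha : ‖a‖ = 1) (hb : ‖b‖ = 1) (hab : ⟪a, b⟫ = 0)
    (θ : ℝ) (x : Eucl n) : ‖rotF a b θ x‖ = ‖x‖ := by
  have haa : ⟪a, a⟫ = (1 : ℝ) := by rw [real_inner_self_eq_norm_sq, ha]; norm_num
  have hbb : ⟪b, b⟫ = (1 : ℝ) := by rw [real_inner_self_eq_norm_sq, hb]; norm_num
  have hba : ⟪b, a⟫ = (0 : ℝ) := by rw [real_inner_comm]; exact hab
  have : ‖rotF a b θ x‖ ^ 2 = ‖x‖ ^ 2 := by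
    rw [← real_inner_self_eq_norm_sq, ← real_inner_self_eq_norm_sq]
    simp only [rotF, gen, inner_add_left, inner_sub_left, real_inner_smul_left, haa, hba, hbb, hab,
      inner_add_right, inner_sub_right, real_inner_smul_right, real_inner_comm x a,
      real_inner_comm x b]
    have := Real.sin_sq_add_cos_sq θ
    rw [real_inner_comm a x, real_inner_comm b x]
    linear_combination (⟪a, x⟫ ^ 2 + ⟪b, x⟫ ^ 2) * this
  exact (sq_eq_sq₀ (norm_nonneg _) (norm_nonneg _)).1 this

/-- The rotation as a linear isometry. -/
def rot {n : ℕ} (a b : Eucl n) (ha : ‖a‖ = 1) (hb : ‖b‖ = 1) (hab : ⟪a, b⟫ = 0) (θ : ℝ) :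
    Eucl n ≃ₗᵢ[ℝ] Eucl n where
  toFun := rotF a b θ
  invFun := rotF a b (-θ)
  map_add' x y := by simp only [rotF, gen, inner_add_left]; module
  map_smul' c x := by simp only [rotF, gen, real_inner_smul_left, RingHom.id_apply]; module
  left_inv x := by simp only [rotF_add ha hb hab]; simp [rotF]
  right_inv x := by simp only [rotF_add ha hb hab]; simp [rotF]
  norm_map' x := rotF_norm ha hb hab θ x

lemma rot_det {n : ℕ} (a b : Eucl n) (ha : ‖a‖ = 1) (hb : ‖b‖ = 1) (hab : ⟪a, b⟫ = 0) (θ : ℝ) :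
    LinearEquiv.det (rot a b ha hb hab θ).toLinearEquiv = 1 := by
  have h1 : (rot a b ha hb hab θ).toLinearEquiv =
      (rot a b ha hb hab (θ/2)).toLinearEquiv * (rot a b ha hb hab (θ/2)).toLinearEquiv := by
    ext1 x
    change rotF a b θ x = rotF a b (θ/2) (rotF a b (θ/2) x)
    rw [rotF_add ha hb hab]; congr 1; ring
  rw [h1, map_mul]
  set d := LinearEquiv.det (rot a b ha hb hab (θ/2)).toLinearEquiv with hd
  have h2 : ‖(d : ℝ)‖ = 1 := by
    rw [hd, LinearEquiv.coe_det]
    rw [← LinearMap.normDet_eq_norm_det]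
    exact LinearIsometry.normDet_eq_one (rot a b ha hb hab (θ/2)).toLinearIsometry
  ext
  rw [Real.norm_eq_abs] at h2
  push_cast
  rw [← abs_mul_abs_self, h2]; norm_num

lemma rotF_hasDerivAt {n : ℕ} {a b : Eucl n} (ha : ‖a‖ = 1) (hb : ‖b‖ = 1) (hab : ⟪a, b⟫ = 0)
    (x : Eucl n) (θ : ℝ) :
    HasDerivAt (fun θ => rotF a b θ x) (gen a b (rotF a b θ x)) θ := by
  have haa : ⟪a, a⟫ = (1 : ℝ) := by rw [real_inner_self_eq_norm_sq, ha]; norm_num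
  have hbb : ⟪b, b⟫ = (1 : ℝ) := by rw [real_inner_self_eq_norm_sq, hb]; norm_num
  have hba : ⟪b, a⟫ = (0 : ℝ) := by rw [real_inner_comm]; exact hab
  have h1 : ⟪rotF a b θ x, a⟫ = Real.cos θ * ⟪x, a⟫ - Real.sin θ * ⟪x, b⟫ := by
    simp only [rotF, gen, inner_add_left, inner_sub_left, real_inner_smul_left, haa, hba]; ring
  have h2 : ⟪rotF a b θ x, b⟫ = Real.cos θ * ⟪x, b⟫ + Real.sin θ * ⟪x, a⟫ := by
    simp only [rotF, gen, inner_add_left, inner_sub_left, real_inner_smul_left, hbb, hab]; ring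
  have hd := ((((Real.hasDerivAt_cos θ).sub_const 1).smul_const
    (⟪x, a⟫ • a + ⟪x, b⟫ • b)).const_add x).add ((Real.hasDerivAt_sin θ).smul_const (gen a b x))
  refine hd.congr_deriv ?_
  rw [gen, gen, h1, h2]
  module

/-- Invariance under rotations, infinitesimally. -/
lemma sint_gen_zero {n : ℕ} {s : SignedMeasure (Eucl n)} (hs : SphSupported s) {e : Eucl n}
    (hz : ∀ g : Eucl n ≃ₗᵢ[ℝ] Eucl n,
      g e = e → LinearEquiv.det g.toLinearEquiv = 1 → s.map g = s)
    {a b : Eucl n} (ha : ‖a‖ = 1) (hb : ‖b‖ = 1) (hab : ⟪a, b⟫ = 0)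
    (hea : ⟪e, a⟫ = 0) (heb : ⟪e, b⟫ = 0)
    {f : Eucl n → ℝ} (hf : ContDiff ℝ (⊤ : ℕ∞) f) {h : ℝ → ℝ} (hh : Continuous h) :
    sint s (fun x => h ⟪x, e⟫ * fderiv ℝ f x (gen a b x)) = 0 := by
  have hnull := sph_parts_null hs
  have hcg : Continuous (gen a b) := by unfold gen; fun_prop
  have hcf : Continuous (fderiv ℝ f) := hf.continuous_fderiv (by simp)
  have hcX : Continuous fun x => fderiv ℝ f x (gen a b x) := hcf.clm_apply hcg
  have hcE : Continuous fun x : Eucl n => h ⟪x, e⟫ := by fun_prop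
  have hfd : Differentiable ℝ f := hf.differentiable (by simp)
  obtain ⟨C, hC⟩ := (isCompact_sphere (0 : Eucl n) 1).exists_bound_of_continuousOn hcX.continuousOn
  obtain ⟨D, hD⟩ := (isCompact_sphere (0 : Eucl n) 1).exists_bound_of_continuousOn hcE.continuousOn
  have hrc : ∀ θ, Continuous (rotF a b θ) := fun θ => (rot a b ha hb hab θ).continuous
  have hder : ∀ (μ : Measure (Eucl n)) [IsFiniteMeasure μ]
      (_ : μ (Metric.sphere (0 : Eucl n) 1)ᶜ = 0),
      HasDerivAt (fun θ => ∫ x, h ⟪x, e⟫ * f (rotF a b θ x) ∂μ)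
        (∫ x, h ⟪x, e⟫ * fderiv ℝ f (rotF a b 0 x) (gen a b (rotF a b 0 x)) ∂μ) 0 := by
    intro μ _ hμ
    refine (hasDerivAt_integral_of_dominated_loc_of_deriv_le (s := Set.univ)
      (bound := fun _ => D * C) (F' := fun θ x =>
        h ⟪x, e⟫ * fderiv ℝ f (rotF a b θ x) (gen a b (rotF a b θ x)))
      Filter.univ_mem ?_ ?_ ?_ ?_ ?_ ?_).2
    · exact Filter.Eventually.of_forall fun θ =>
        (hcE.mul (hf.continuous.comp (hrc θ))).aestronglyMeasurable
    · exact integrable_sph hμ (hcE.mul (hf.continuous.comp (hrc 0)))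
    · exact (hcE.mul (hcX.comp (hrc 0))).aestronglyMeasurable
    · filter_upwards [ae_sph hμ] with x hx θ _
      rw [norm_mul]
      have h1 := hD x (by simp [hx])
      have h2 := hC (rotF a b θ x) (by simp [rotF_norm ha hb hab, hx])
      exact mul_le_mul h1 h2 (norm_nonneg _) ((norm_nonneg _).trans h1)
    · exact integrable_const _
    · refine Filter.Eventually.of_forall fun x θ _ => ?_
      exact ((hfd _).hasFDerivAt.comp_hasDerivAt θ (rotF_hasDerivAt ha hb hab x θ)).const_mul _
  have h1 := (hder _ hnull.1).sub (hder _ hnull.2)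
  have hconst : ∀ θ, sint s (fun x => h ⟪x, e⟫ * f (rotF a b θ x)) =
      sint s (fun x => h ⟪x, e⟫ * f x) := by
    intro θ
    have hge : rot a b ha hb hab θ e = e := by
      change rotF a b θ e = e
      simp [rotF, gen, hea, heb]
    have := sint_map_inv hs (rot a b ha hb hab θ) (hz _ hge (rot_det a b ha hb hab θ))
      (f := fun x => h ⟪x, e⟫ * f x) (hcE.mul hf.continuous)
    rw [← this]
    congr 1
    ext x
    have h3 : ⟪rot a b ha hb hab θ x, e⟫ = ⟪x, e⟫ := by
      conv_lhs => rw [← hge]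
      exact (rot a b ha hb hab θ).inner_map_map x e
    rw [h3]
    rfl
  have h2 : HasDerivAt (fun θ => sint s (fun x => h ⟪x, e⟫ * f (rotF a b θ x)))
      (sint s (fun x => h ⟪x, e⟫ * fderiv ℝ f (rotF a b 0 x) (gen a b (rotF a b 0 x)))) 0 := h1
  simp only [hconst] at h2
  have h4 := h2.unique (hasDerivAt_const _ _)
  have h5 : ∀ x, rotF a b 0 x = x := fun x => by simp [rotF]
  simpa only [h5] using h4

/-! ### Second derivatives -/

/-- Second derivative as iterated directional derivative. -/
def d2 {n : ℕ} (f : Eucl n → ℝ) (x v w : Eucl n) : ℝ := fderiv ℝ (fun y => fderiv ℝ f y w) x v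

/-- The directional derivative. -/
def dd {n : ℕ} (w : Eucl n) (f : Eucl n → ℝ) (y : Eucl n) : ℝ := fderiv ℝ f y w

lemma dd_contDiff {n : ℕ} {f : Eucl n → ℝ} (hf : ContDiff ℝ (⊤ : ℕ∞) f) (w : Eucl n) :
    ContDiff ℝ (⊤ : ℕ∞) (dd w f) :=
  (hf.fderiv_right (m := (⊤ : ℕ∞)) (by simp)).clm_apply contDiff_const

lemma d2_eq {n : ℕ} {f : Eucl n → ℝ} (hf : ContDiff ℝ (⊤ : ℕ∞) f) (x v w : Eucl n) :
    d2 f x v w = fderiv ℝ (fderiv ℝ f) x v w := by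
  have : DifferentiableAt ℝ (fderiv ℝ f) x :=
    (hf.fderiv_right (m := (⊤ : ℕ∞)) (by simp)).differentiable (by simp) x
  unfold d2
  rw [fderiv_clm_apply this (differentiableAt_const _)]
  simp

lemma d2_symm {n : ℕ} {f : Eucl n → ℝ} (hf : ContDiff ℝ (⊤ : ℕ∞) f) (x v w : Eucl n) :
    d2 f x v w = d2 f x w v := by
  rw [d2_eq hf, d2_eq hf]
  exact hf.contDiffAt.isSymmSndFDerivAt (by
    rw [minSmoothness_of_isRCLikeNormedField]
    exact WithTop.coe_le_coe.2 (show ((2 : ℕ∞) ≤ ⊤) from le_top)) v w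

/-- Harmonicity in every orthonormal basis. -/
def Harm {n : ℕ} (f : Eucl n → ℝ) : Prop :=
  ∀ (b : OrthonormalBasis (Fin n) ℝ (Eucl n)) (x : Eucl n), ∑ i, d2 f x (b i) (b i) = 0

lemma harm_of_eLap {n : ℕ} {f : Eucl n → ℝ} (hf : ContDiff ℝ (⊤ : ℕ∞) f)
    (h : ∀ x, eLap n f x = 0) : Harm f := by
  intro b x
  have h1 := congrFun (InnerProductSpace.laplacian_eq_iteratedFDeriv_orthonormalBasis f b) x
  have h2 := congrFun (InnerProductSpace.laplacian_eq_iteratedFDeriv_orthonormalBasis f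
    (EuclideanSpace.basisFun (Fin n) ℝ)) x
  have h3 := h x
  rw [h1] at h2
  unfold eLap at h3
  simp only [iteratedFDeriv_two_apply] at h2 h3
  simp only [d2_eq hf]
  simp at h2 h3
  rw [h2, h3]

lemma harm_comp {n : ℕ} {f : Eucl n → ℝ} (hf : ContDiff ℝ (⊤ : ℕ∞) f)
    (h : Harm f) (R : Eucl n ≃ₗᵢ[ℝ] Eucl n) : Harm (fun x => f (R x)) := by
  have key : ∀ g : Eucl n → ℝ, ContDiff ℝ (⊤ : ℕ∞) g → ∀ x w,
      fderiv ℝ (fun x => g (R x)) x w = fderiv ℝ g (R x) (R w) := by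
    intro g hg x w
    have h1 : HasFDerivAt R (R.toContinuousLinearEquiv : Eucl n →L[ℝ] Eucl n) x :=
      R.toContinuousLinearEquiv.hasFDerivAt
    have := (hg.differentiable (by simp) (R x)).hasFDerivAt.comp x h1
    have h2 := this.fderiv
    change fderiv ℝ (g ∘ R) x w = _
    rw [h2]; rfl
  intro b x
  rw [← h (b.map R) (R x)]
  refine Finset.sum_congr rfl fun i _ => ?_
  unfold d2
  simp only [key f hf]
  rw [key (fun y => fderiv ℝ f y (R (b i))) (dd_contDiff hf _)]
  simp

lemma harm_dd {n : ℕ} {f : Eucl n → ℝ} (hf : ContDiff ℝ (⊤ : ℕ∞) f)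
    (h : Harm f) (e : Eucl n) : Harm (dd e f) := by
  intro b x
  have hd : ∀ w, ContDiff ℝ (⊤ : ℕ∞) (dd w f) := dd_contDiff hf
  have h1 : ∀ i, d2 (dd e f) x (b i) (b i) = fderiv ℝ (fun y => d2 f y (b i) (b i)) x e := by
    intro i
    have e1 : (fun y => fderiv ℝ (dd e f) y (b i)) = dd e (dd (b i) f) := by
      ext y
      exact d2_symm hf y (b i) e
    rw [d2, e1]
    exact d2_symm (hd (b i)) x (b i) e
  simp only [h1]
  have h2 : fderiv ℝ (fun y => ∑ i, d2 f y (b i) (b i)) x e = 0 := by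
    simp [h b]
  rw [← h2, fderiv_fun_sum (fun i _ => ?_)]
  · simp
  · exact (dd_contDiff (dd_contDiff hf (b i)) (b i)).differentiable (by simp) x

/-- Homogeneity. -/
def Hom {n : ℕ} (k : ℕ) (f : Eucl n → ℝ) : Prop := ∀ (c : ℝ) (x : Eucl n), f (c • x) = c ^ k * f x

lemma euler {n : ℕ} {f : Eucl n → ℝ} (hf : ContDiff ℝ (⊤ : ℕ∞) f) {k : ℕ} (h : Hom k f)
    (x : Eucl n) : fderiv ℝ f x x = k * f x := by
  have h1 : HasDerivAt (fun c : ℝ => c • x) x 1 := by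
    simpa using (hasDerivAt_id (1 : ℝ)).smul_const x
  have hfx : HasFDerivAt f (fderiv ℝ f x) ((1 : ℝ) • x) := by
    rw [one_smul]; exact (hf.differentiable (by simp) x).hasFDerivAt
  have h2 := hfx.comp_hasDerivAt (1 : ℝ) h1
  have h3 : HasDerivAt (fun c : ℝ => c ^ k * f x) (k * f x) 1 := by
    simpa using (hasDerivAt_pow k (1 : ℝ)).mul_const (f x)
  have h4 : (f ∘ fun c : ℝ => c • x) = fun c : ℝ => c ^ k * f x := funext fun c => h c x
  rw [h4] at h2
  exact h2.unique h3

lemma hom_dd {n : ℕ} {f : Eucl n → ℝ} (hf : ContDiff ℝ (⊤ : ℕ∞) f) {k : ℕ} (h : Hom (k + 1) f)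
    (e : Eucl n) : Hom k (dd e f) := by
  have h1 : ∀ (c : ℝ) x, c * dd e f (c • x) = c ^ (k + 1) * dd e f x := by
    intro c x
    have hfd := hf.differentiable (by simp)
    have l1 : HasFDerivAt (fun x : Eucl n => c • x) (c • ContinuousLinearMap.id ℝ (Eucl n)) x :=
      (hasFDerivAt_id x).const_smul c
    have h2 := (hfd (c • x)).hasFDerivAt.comp x l1
    have h3 := (hfd x).hasFDerivAt.const_mul (c ^ (k + 1))
    have h4 : (f ∘ fun x : Eucl n => c • x) = fun x => c ^ (k + 1) * f x := funext fun x => h c x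
    rw [h4] at h2
    have := DFunLike.congr_fun (h2.unique h3) e
    simpa [dd] using this
  intro c x
  have hne : ∀ c : ℝ, c ≠ 0 → dd e f (c • x) = c ^ k * dd e f x := by
    intro c hc
    have := h1 c x
    rw [pow_succ', mul_assoc] at this
    exact mul_left_cancel₀ hc this
  have hc1 : Continuous fun c : ℝ => dd e f (c • x) :=
    (dd_contDiff hf e).continuous.comp (by fun_prop)
  have hc2 : Continuous fun c : ℝ => c ^ k * dd e f x := by fun_prop
  have := Continuous.ext_on (dense_compl_singleton (0 : ℝ)) hc1 hc2 (fun c hc => hne c hc)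
  exact congrFun this c

/-! ### The key identity -/

lemma alg_sum {ι : Type*} [DecidableEq ι] (J : Finset ι) (x p : ι → ℝ) (H : ι → ι → ℝ) :
    ∑ i ∈ J, ∑ j ∈ J, ((x i * x i * H j j - x i * x j * H j i - x j * x i * H i j
        + x j * x j * H i i)
      + ((x i * (if i = j then 1 else 0) - x j) * p j
        - (x i - x j * (if i = j then 1 else 0)) * p i)) =
    2 * (∑ i ∈ J, x i * x i) * (∑ j ∈ J, H j j) - 2 * ∑ i ∈ J, ∑ j ∈ J, x i * x j * H i j
      - 2 * ((J.card : ℝ) - 1) * ∑ j ∈ J, x j * p j := by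
  have e1 : ∑ i ∈ J, ∑ j ∈ J, x i * x i * H j j = (∑ i ∈ J, x i * x i) * (∑ j ∈ J, H j j) := by
    rw [Finset.sum_mul_sum]
  have e2 : ∑ i ∈ J, ∑ j ∈ J, x j * x j * H i i = (∑ i ∈ J, x i * x i) * (∑ j ∈ J, H j j) := by
    rw [Finset.sum_comm, e1]
  have e3 : ∑ i ∈ J, ∑ j ∈ J, x i * x j * H j i = ∑ i ∈ J, ∑ j ∈ J, x i * x j * H i j := by
    rw [Finset.sum_comm]
    refine Finset.sum_congr rfl fun i _ => Finset.sum_congr rfl fun j _ => by ring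
  have e4 : ∑ i ∈ J, ∑ j ∈ J, x j * x i * H i j = ∑ i ∈ J, ∑ j ∈ J, x i * x j * H i j :=
    Finset.sum_congr rfl fun i _ => Finset.sum_congr rfl fun j _ => by ring
  have e5 : ∑ i ∈ J, ∑ j ∈ J, x i * (if i = j then 1 else 0) * p j = ∑ j ∈ J, x j * p j := by
    refine Finset.sum_congr rfl fun i hi => ?_
    simp [hi]
  have e6 : ∑ i ∈ J, ∑ j ∈ J, x j * (if i = j then 1 else 0) * p i = ∑ j ∈ J, x j * p j := by
    refine Finset.sum_congr rfl fun i hi => ?_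
    simp [hi]
  have e7 : ∑ i ∈ J, ∑ j ∈ J, x j * p j = J.card * ∑ j ∈ J, x j * p j := by simp
  have e8 : ∑ i ∈ J, ∑ j ∈ J, x i * p i = J.card * ∑ j ∈ J, x j * p j := by
    rw [Finset.sum_comm, e7]
  simp only [Finset.sum_add_distrib, Finset.sum_sub_distrib, sub_mul, e1, e2, e3, e4, e5, e6, e7,
    e8]
  ring

lemma gen_gen_deriv {n : ℕ} {f : Eucl n → ℝ} (hf : ContDiff ℝ (⊤ : ℕ∞) f) (a b x w : Eucl n) :
    fderiv ℝ (fun y => fderiv ℝ f y (gen a b y)) x w =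
      fderiv ℝ (fderiv ℝ f) x w (gen a b x) + fderiv ℝ f x (gen a b w) := by
  have hd : DifferentiableAt ℝ (fderiv ℝ f) x :=
    (hf.fderiv_right (m := (⊤ : ℕ∞)) (by simp)).differentiable (by simp) x
  let G : Eucl n →L[ℝ] Eucl n :=
    LinearMap.toContinuousLinearMap
      { toFun := gen a b
        map_add' := fun x y => by simp only [gen, inner_add_left]; module
        map_smul' := fun c x => by
          simp only [gen, real_inner_smul_left, RingHom.id_apply]; module }
  have hG : HasFDerivAt (gen a b) G x := G.hasFDerivAt
  rw [fderiv_clm_apply hd hG.differentiableAt, hG.fderiv]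
  simp only [add_apply, ContinuousLinearMap.comp_apply,
    ContinuousLinearMap.flip_apply]
  rw [add_comm]
  rfl

lemma exists_basis {n : ℕ} {e : Eucl n} (he : ‖e‖ = 1) (i0 : Fin n) :
    ∃ b : OrthonormalBasis (Fin n) ℝ (Eucl n), b i0 = e := by
  have ho : Orthonormal ℝ (({i0} : Set (Fin n)).domRestrict (fun _ => e)) := by
    rw [orthonormal_iff_ite]
    rintro ⟨i, rfl⟩ ⟨j, rfl⟩
    simp [Set.domRestrict, real_inner_self_eq_norm_sq, he]
  obtain ⟨b, hb⟩ := ho.exists_orthonormalBasis_extension_of_card_eq (by simp)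
  exact ⟨b, hb i0 rfl⟩

/-- The angular operator, pointwise on the sphere. -/
lemma angular {n : ℕ} {f : Eucl n → ℝ} (hf : ContDiff ℝ (⊤ : ℕ∞) f) {k : ℕ} (hk : Hom (k + 1) f)
    (hh : Harm f) (b : OrthonormalBasis (Fin n) ℝ (Eucl n)) (i0 : Fin n) (x : Eucl n)
    (hx : ‖x‖ = 1) :
    ∑ i ∈ Finset.univ.erase i0, ∑ j ∈ Finset.univ.erase i0,
      fderiv ℝ (fun y => fderiv ℝ f y (gen (b i) (b j) y)) x (gen (b i) (b j) x) =
    2 * (- dd (b i0) (dd (b i0) f) x + (2 * k + n - 2) * (⟪x, b i0⟫ * dd (b i0) f x)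
      - (k + 1) * (k + n - 2) * f x) := by
  set D1 := fderiv ℝ f x with hD1
  set D2 := fderiv ℝ (fderiv ℝ f) x with hD2
  set J := (Finset.univ : Finset (Fin n)).erase i0 with hJ
  have hsym : ∀ v w, D2 v w = D2 w v := fun v w => by
    rw [← d2_eq hf, ← d2_eq hf]; exact d2_symm hf x v w
  have hT : ∀ i j, fderiv ℝ (fun y => fderiv ℝ f y (gen (b i) (b j) y)) x (gen (b i) (b j) x) =
      ((⟪x, b i⟫ * ⟪x, b i⟫ * D2 (b j) (b j) - ⟪x, b i⟫ * ⟪x, b j⟫ * D2 (b j) (b i)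
        - ⟪x, b j⟫ * ⟪x, b i⟫ * D2 (b i) (b j)
        + ⟪x, b j⟫ * ⟪x, b j⟫ * D2 (b i) (b i))
      + ((⟪x, b i⟫ * (if i = j then 1 else 0) - ⟪x, b j⟫) * D1 (b j)
        - (⟪x, b i⟫ - ⟪x, b j⟫ * (if i = j then 1 else 0)) * D1 (b i))) := by
    intro i j
    rw [gen_gen_deriv hf, ← hD1, ← hD2]
    have h1 : ⟪gen (b i) (b j) x, b i⟫ = ⟪x, b i⟫ * (if i = j then 1 else 0) - ⟪x, b j⟫ := by
      simp only [gen, inner_sub_left, real_inner_smul_left, b.inner_eq_ite]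
      by_cases hij : i = j <;> simp [hij, eq_comm]
    have h2 : ⟪gen (b i) (b j) x, b j⟫ = ⟪x, b i⟫ - ⟪x, b j⟫ * (if i = j then 1 else 0) := by
      simp only [gen, inner_sub_left, real_inner_smul_left, b.inner_eq_ite]
      by_cases hij : i = j <;> simp [hij]
    rw [gen.eq_1 (b i) (b j) (gen (b i) (b j) x), h1, h2]
    simp only [gen, map_sub, map_smul, sub_apply, smul_apply,
      smul_eq_mul]
    ring
  simp only [hT]
  rw [alg_sum J (fun i => ⟪x, b i⟫) (fun i => D1 (b i)) (fun i j => D2 (b i) (b j))]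
  have hxs : ∑ i, ⟪x, b i⟫ • b i = x := by
    conv_rhs => rw [← b.sum_repr' x]
    refine Finset.sum_congr rfl fun i _ => by rw [real_inner_comm]
  have hys : ∑ i ∈ J, ⟪x, b i⟫ • b i = x - ⟪x, b i0⟫ • b i0 := by
    have h1 := hxs
    rw [← Finset.add_sum_erase _ _ (Finset.mem_univ i0)] at h1
    exact eq_sub_of_add_eq' h1
  have hn : ∑ i ∈ J, ⟪x, b i⟫ * ⟪x, b i⟫ = 1 - ⟪x, b i0⟫ * ⟪x, b i0⟫ := by
    have h1 : ∑ i, ⟪x, b i⟫ * ⟪x, b i⟫ = (1 : ℝ) := by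
      have := b.sum_inner_mul_inner x x
      rw [real_inner_self_eq_norm_sq, hx, one_pow] at this
      rw [← this]
      refine Finset.sum_congr rfl fun i _ => by rw [real_inner_comm x (b i)]
    rw [← h1, ← Finset.add_sum_erase _ _ (Finset.mem_univ i0)]
    ring
  have hl : ∑ j ∈ J, D2 (b j) (b j) = - D2 (b i0) (b i0) := by
    have := hh b x
    simp only [d2_eq hf, ← hD2] at this
    rw [← Finset.add_sum_erase _ _ (Finset.mem_univ i0)] at this
    linarith
  have hp : ∑ j ∈ J, ⟪x, b j⟫ * D1 (b j) = D1 (x - ⟪x, b i0⟫ • b i0) := by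
    rw [← hys, map_sum]; simp
  have hq : ∑ i ∈ J, ∑ j ∈ J, ⟪x, b i⟫ * ⟪x, b j⟫ * D2 (b i) (b j) =
      D2 (x - ⟪x, b i0⟫ • b i0) (x - ⟪x, b i0⟫ • b i0) := by
    rw [← hys]
    simp only [map_sum, sum_apply, map_smul, smul_apply, smul_eq_mul, Finset.mul_sum]
    rw [Finset.sum_comm]
    refine Finset.sum_congr rfl fun i _ => Finset.sum_congr rfl fun j _ => by ring
  have hcard : (J.card : ℝ) = n - 1 := by
    have : J.card + 1 = n := by
      rw [hJ, Finset.card_erase_add_one (Finset.mem_univ _)]; simp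
    have h2 : ((J.card : ℝ) + 1) = n := by exact_mod_cast this
    linarith
  have ex1 : D1 x = (k + 1) * f x := by
    have := euler hf hk x
    push_cast at this; exact this
  have ex2 : ∀ w, D2 x w = k * D1 w := fun w => by
    rw [← d2_eq hf]; exact euler (dd_contDiff hf w) (hom_dd hf hk w) x
  have ett : dd (b i0) (dd (b i0) f) x = D2 (b i0) (b i0) := d2_eq hf x (b i0) (b i0)
  have et : dd (b i0) f x = D1 (b i0) := rfl
  rw [hn, hl, hp, hq, hcard, ett, et]
  simp only [map_sub, map_smul, sub_apply, smul_apply,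
    smul_eq_mul, ex2, hsym (b i0) x, ex1]
  ring

lemma legP_continuous (n : ℕ) : ∀ k, Continuous (legP n k)
  | 0 => by simp only [legP]; fun_prop
  | 1 => by simp only [legP]; fun_prop
  | (k + 2) => by
    have h1 := legP_continuous n k
    have h2 := legP_continuous n (k + 1)
    simp only [legP]
    fun_prop

section core

variable {n : ℕ} {e : Eucl n} {ν : SignedMeasure (Eucl n)}

lemma recur (hn : 3 ≤ n) (he : ‖e‖ = 1) (hνs : SphSupported ν)
    (hzonal : ∀ g : Eucl n ≃ₗᵢ[ℝ] Eucl n,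
      g e = e → LinearEquiv.det g.toLinearEquiv = 1 → ν.map g = ν)
    {f : Eucl n → ℝ} (hf : ContDiff ℝ (⊤ : ℕ∞) f) {k : ℕ} (hk : Hom (k + 1) f)
    (hh : Harm f) {h : ℝ → ℝ} (hc : Continuous h) :
    ((k : ℝ) + 1) * (k + n - 2) * sint ν (fun x => h ⟪x, e⟫ * f x) =
      (2 * k + n - 2) * sint ν (fun x => (h ⟪x, e⟫ * ⟪x, e⟫) * dd e f x)
        - sint ν (fun x => h ⟪x, e⟫ * dd e (dd e f) x) := by
  obtain ⟨b, hb⟩ := exists_basis he (⟨0, by omega⟩ : Fin n)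
  set i0 : Fin n := ⟨0, by omega⟩
  have hgc : ∀ a b : Eucl n, ContDiff ℝ (⊤ : ℕ∞) (gen a b) := fun a b => by
    unfold gen
    exact ((contDiff_id.inner ℝ contDiff_const).smul contDiff_const).sub
      ((contDiff_id.inner ℝ contDiff_const).smul contDiff_const)
  have hX : ∀ a b : Eucl n, ContDiff ℝ (⊤ : ℕ∞) (fun y => fderiv ℝ f y (gen a b y)) := fun a b =>
    (hf.fderiv_right (m := (⊤ : ℕ∞)) (by simp)).clm_apply (hgc a b)
  have hXX : ∀ a b : Eucl n, Continuous (fun x => h ⟪x, e⟫ *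
      fderiv ℝ (fun y => fderiv ℝ f y (gen a b y)) x (gen a b x)) := fun a b => by
    have h1 : Continuous fun x => fderiv ℝ (fun y => fderiv ℝ f y (gen a b y)) x (gen a b x) :=
      (((hX a b).fderiv_right (m := (⊤ : ℕ∞)) (by simp)).clm_apply (hgc a b)).continuous
    fun_prop
  have hzero : ∀ i ∈ Finset.univ.erase i0, ∀ j ∈ Finset.univ.erase i0,
      sint ν (fun x => h ⟪x, e⟫ *
        fderiv ℝ (fun y => fderiv ℝ f y (gen (b i) (b j) y)) x (gen (b i) (b j) x)) = 0 := by
    intro i hi j hj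
    have hi' := Finset.ne_of_mem_erase hi
    have hj' := Finset.ne_of_mem_erase hj
    by_cases hij : i = j
    · subst hij
      have : ∀ x, gen (b i) (b i) x = 0 := fun x => by simp [gen]
      simp [this, sint]
    · refine sint_gen_zero hνs hzonal (b.norm_eq_one i) (b.norm_eq_one j) ?_ ?_ ?_ (hX _ _) hc
      · rw [b.inner_eq_ite]; simp [hij]
      · rw [← hb, b.inner_eq_ite]; simp [hi'.symm]
      · rw [← hb, b.inner_eq_ite]; simp [hj'.symm]
  have hsum : sint ν (fun x => ∑ i ∈ Finset.univ.erase i0, ∑ j ∈ Finset.univ.erase i0,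
      h ⟪x, e⟫ *
        fderiv ℝ (fun y => fderiv ℝ f y (gen (b i) (b j) y)) x (gen (b i) (b j) x)) = 0 := by
    rw [sint_sum hνs _ (fun i => continuous_finsetSum _ fun j _ => hXX (b i) (b j))]
    refine Finset.sum_eq_zero fun i hi => ?_
    rw [sint_sum hνs _ (fun j => hXX (b i) (b j))]
    exact Finset.sum_eq_zero fun j hj => hzero i hi j hj
  have hd1 : Continuous (dd e f) := (dd_contDiff hf e).continuous
  have hd2 : Continuous (dd e (dd e f)) := (dd_contDiff (dd_contDiff hf e) e).continuous
  have hf0 := hf.continuous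
  have hpt : sint ν (fun x => ∑ i ∈ Finset.univ.erase i0, ∑ j ∈ Finset.univ.erase i0,
      h ⟪x, e⟫ *
        fderiv ℝ (fun y => fderiv ℝ f y (gen (b i) (b j) y)) x (gen (b i) (b j) x)) =
      sint ν (fun x => ((-2) * (h ⟪x, e⟫ * dd e (dd e f) x)
        + (2 * (2 * k + n - 2)) * ((h ⟪x, e⟫ * ⟪x, e⟫) * dd e f x))
        + (-2 * ((k + 1) * (k + n - 2))) * (h ⟪x, e⟫ * f x)) := by
    refine sint_congr_sph hνs fun x hx => ?_
    simp only [← Finset.mul_sum]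
    rw [angular hf hk hh b i0 x hx, hb]
    ring
  rw [hsum, sint_add hνs (by fun_prop) (by fun_prop), sint_add hνs (by fun_prop) (by fun_prop),
    sint_smul, sint_smul, sint_smul] at hpt
  linarith

lemma core_aux (hn : 3 ≤ n) (he : ‖e‖ = 1) (hνs : SphSupported ν)
    (hzonal : ∀ g : Eucl n ≃ₗᵢ[ℝ] Eucl n,
      g e = e → LinearEquiv.det g.toLinearEquiv = 1 → ν.map g = ν) :
    ∀ (k : ℕ) (f : Eucl n → ℝ), ContDiff ℝ (⊤ : ℕ∞) f → Hom k f → Harm f →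
      ∀ h : ℝ → ℝ, Continuous h →
      sint ν (fun x => h ⟪x, e⟫ * f x) = f e * sint ν (fun x => h ⟪x, e⟫ * legP n k ⟪x, e⟫)
  | 0, f, hf, hk, hh, h, hc => by
    have : ∀ x, f x = f e := fun x => by
      have h1 := hk 0 x
      have h2 := hk 0 e
      simp at h1 h2
      rw [← h1, h2]
    rw [← sint_smul]
    congr 1
    ext x
    rw [this x]
    simp [legP, mul_comm]
  | 1, f, hf, hk, hh, h, hc => by
    have hk0 : Hom 0 (dd e f) := hom_dd hf hk e
    have h1 : ∀ x, dd e f x = f e := fun x => by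
      have h1 := hk0 0 x
      have h2 := hk0 0 e
      simp at h1 h2
      have h3 : dd e f e = f e := by simpa [dd] using euler hf hk e
      rw [← h1, h2, h3]
    have h2 : ∀ x, dd e (dd e f) x = 0 := fun x => by
      rw [funext h1]; simp [dd]
    have := recur (k := 0) hn he hνs hzonal hf hk hh hc
    have hn2 : (n : ℝ) - 2 ≠ 0 := by
      have : (3 : ℝ) ≤ n := by exact_mod_cast hn
      linarith
    have h0 : sint ν (fun _ => (0 : ℝ)) = 0 := by simp [sint]
    simp only [h1, h2, mul_zero, h0, Nat.cast_zero, zero_add, one_mul, sub_zero] at this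
    rw [mul_left_cancel₀ hn2 this, ← sint_smul]
    congr 1
    ext x
    simp only [legP]
    ring
  | (k + 2), f, hf, hk, hh, h, hc => by
    have r := recur (k := k + 1) hn he hνs hzonal hf hk hh hc
    have hk1 : Hom (k + 1) (dd e f) := hom_dd hf hk e
    have hf1 := dd_contDiff hf e
    have hh1 := harm_dd hf hh e
    have i1 := core_aux hn he hνs hzonal (k + 1) (dd e f) hf1 hk1 hh1 (fun t => h t * t)
      (by fun_prop)
    have i2 := core_aux hn he hνs hzonal k (dd e (dd e f)) (dd_contDiff hf1 e) (hom_dd hf1 hk1 e)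
      (harm_dd hf1 hh1 e) h hc
    have e1 : dd e f e = (k + 2) * f e := by
      have := euler hf hk e
      push_cast at this; exact this
    have e2 : dd e (dd e f) e = (k + 1) * dd e f e := by
      have := euler hf1 hk1 e
      push_cast at this; exact this
    have c1 := legP_continuous n (k + 1)
    have c0 := legP_continuous n k
    have hpos : (k : ℝ) + n - 1 ≠ 0 := by
      have : (3 : ℝ) ≤ n := by exact_mod_cast hn
      have : (0 : ℝ) ≤ k := by positivity
      linarith
    have hL : sint ν (fun x => h ⟪x, e⟫ * legP n (k + 2) ⟪x, e⟫) =
        ((2 * k + n) / (k + n - 1)) * sint ν (fun x => (h ⟪x, e⟫ * ⟪x, e⟫) * legP n (k + 1) ⟪x, e⟫)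
        + (-(k + 1) / (k + n - 1)) * sint ν (fun x => h ⟪x, e⟫ * legP n k ⟪x, e⟫) := by
      rw [← sint_smul, ← sint_smul, ← sint_add hνs (by fun_prop) (by fun_prop)]
      congr 1
      ext x
      simp only [legP]
      field_simp
      ring
    rw [hL]
    rw [i1, i2, e2, e1] at r
    push_cast at r
    have hk2 : (k : ℝ) + 2 ≠ 0 := by positivity
    generalize sint ν (fun x => (h ⟪x, e⟫ * ⟪x, e⟫) * legP n (k + 1) ⟪x, e⟫) = A at *
    generalize sint ν (fun x => h ⟪x, e⟫ * legP n k ⟪x, e⟫) = B at *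
    generalize sint ν (fun x => h ⟪x, e⟫ * f x) = C at *
    have r' : ((k : ℝ) + n - 1) * C = f e * ((2 * k + n) * A - (k + 1) * B) := by
      apply mul_left_cancel₀ hk2
      linear_combination r
    field_simp
    linear_combination r'

end core

/-- Funk–Hecke theorem for measures: let `ν` be a finite signed zonal Borel
measure on `S^{n-1}`, identified via cylindrical coordinates with the measure `μt` on
`[-1,1]` (so that testing `ν` on zonal functions is integration against
`ω_{n-1}(1-t²)^{(n-3)/2} dμt`), and let `σ` be a finite signed Borel measure on
`S^{n-1}`. Then the degree-`k` spherical harmonic component of `σ ∗ ν` equals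
`a_k^n[μ] ⋅ π_k σ`, with `a_k^n[μ] = ω_{n-1} ∫ P_k^n(t)(1-t²)^{(n-3)/2} dμt`; i.e.,
tested against any spherical harmonic `p` of degree `k`,
`⟨p, σ ∗ ν⟩ = a_k^n[μ] ⟨p, σ⟩`. The convolution `σ ∗ ν` is the signed measure `τ`
characterized by `∫ h dτ = ∫∫ h(R_v u) dν(u) dσ(v)` for continuous `h`, where
`R_v ∈ SO(n)` is any rotation taking the pole `ē` to `v`. -/
theorem funk_hecke_measures (n : ℕ) (hn : 3 ≤ n) (e : Eucl n) (he : ‖e‖ = 1)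
    (σ ν : SignedMeasure (Eucl n)) (hσs : SphSupported σ) (hνs : SphSupported ν)
    (hzonal : ∀ g : Eucl n ≃ₗᵢ[ℝ] Eucl n,
      g e = e → LinearEquiv.det g.toLinearEquiv = 1 → ν.map g = ν)
    (μt : SignedMeasure ℝ)
    (hμt : ∀ A : Set ℝ, MeasurableSet A → A ⊆ (Set.Icc (-1 : ℝ) 1)ᶜ → μt A = 0)
    (hident : ∀ h : ℝ → ℝ, Continuous h →
      sint ν (fun u => h ⟪u, e⟫)
        = sint μt (fun t => ωS (n - 1) * (1 - t ^ 2) ^ (((n : ℝ) - 3) / 2) * h t))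
    (R : Eucl n → (Eucl n ≃ₗᵢ[ℝ] Eucl n))
    (hR : ∀ v : Eucl n, ‖v‖ = 1 → R v e = v ∧ LinearEquiv.det (R v).toLinearEquiv = 1)
    (τ : SignedMeasure (Eucl n)) (hτs : SphSupported τ)
    (hτ : ∀ h : Eucl n → ℝ, Continuous h →
      sint τ h = sint σ (fun v => sint ν (fun u => h (R v u)))) :
    ∀ (k : ℕ) (p : Eucl n → ℝ), ContDiff ℝ (⊤ : ℕ∞) p →
      (∀ (c : ℝ) (x : Eucl n), p (c • x) = c ^ k * p x) →
      (∀ x : Eucl n, eLap n p x = 0) →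
      sint τ p
        = (ωS (n - 1) *
            sint μt (fun t => legP n k t * (1 - t ^ 2) ^ (((n : ℝ) - 3) / 2))) *
          sint σ p := by
  intro k p hp hhom hlap
  have hharm := harm_of_eLap hp hlap
  have key : ∀ v : Eucl n, ‖v‖ = 1 → sint ν (fun u => p (R v u)) =
      sint ν (fun u => legP n k ⟪u, e⟫) * p v := by
    intro v hv
    have hq : ContDiff ℝ (⊤ : ℕ∞) (fun u => p (R v u)) :=
      hp.comp (R v).toContinuousLinearEquiv.contDiff
    have := core_aux hn he hνs hzonal k (fun u => p (R v u)) hq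
      (fun c x => by simp only [map_smul]; exact hhom c _) (harm_comp hp hharm (R v))
      (fun _ => 1) continuous_const
    simp only [one_mul, (hR v hv).1] at this
    rw [this, mul_comm]
  rw [hτ p hp.continuous, sint_congr_sph hσs key, sint_smul, hident _ (legP_continuous n k),
    ← sint_smul μt]
  congr 2
  ext t
  ring
end
end

section
/- If μ is a non-negative zonal Borel measure on S^{n-1} with center of mass at the origin, then for every convex body K ⊂ ℝ^n the convolution h_K ∗ μ is again a support function of a convex body Ψ₁K, and the resulting map Ψ₁ : K^n → K^n is a continuous, translation invariant, SO(n) equivariant Minkowski valuation of degree 1. -/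
open scoped RealInnerProductSpace
open MeasureTheory

noncomputable section

/-- Support function of a convex body. -/
def suppFn {n : ℕ} (K : ConvexBody (Eucl n)) (u : Eucl n) : ℝ :=
  sSup ((fun x => ⟪u, x⟫) '' (K : Set (Eucl n)))

namespace Kid
variable {n : ℕ}

lemma bddAbove_supp (K : ConvexBody (Eucl n)) (u : Eucl n) :
    BddAbove ((fun x => (⟪u, x⟫ : ℝ)) '' (K : Set (Eucl n))) :=
  K.isCompact.bddAbove_image (by fun_prop)

lemma le_supp (K : ConvexBody (Eucl n)) (u : Eucl n) {x : Eucl n} (hx : x ∈ (K : Set (Eucl n))) :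
    (⟪u, x⟫ : ℝ) ≤ suppFn K u :=
  le_csSup (bddAbove_supp K u) ⟨x, hx, rfl⟩

lemma supp_le (K : ConvexBody (Eucl n)) (u : Eucl n) {c : ℝ}
    (h : ∀ x ∈ (K : Set (Eucl n)), (⟪u, x⟫ : ℝ) ≤ c) : suppFn K u ≤ c := by
  refine csSup_le (K.nonempty.image _) ?_
  rintro _ ⟨x, hx, rfl⟩
  exact h x hx

lemma supp_attained (K : ConvexBody (Eucl n)) (u : Eucl n) :
    ∃ x ∈ (K : Set (Eucl n)), suppFn K u = (⟪u, x⟫ : ℝ) := by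
  obtain ⟨x, hx, h⟩ := K.isCompact.exists_isMaxOn K.nonempty
    (f := fun x => (⟪u, x⟫ : ℝ)) (by fun_prop)
  exact ⟨x, hx, le_antisymm (supp_le K u fun y hy => h hy) (le_supp K u hx)⟩

lemma supp_add_le (K : ConvexBody (Eucl n)) (u v : Eucl n) :
    suppFn K (u + v) ≤ suppFn K u + suppFn K v := by
  refine supp_le K _ fun x hx => ?_
  rw [inner_add_left]
  exact add_le_add (le_supp K u hx) (le_supp K v hx)

lemma supp_smul (K : ConvexBody (Eucl n)) (c : ℝ) (hc : 0 ≤ c) (u : Eucl n) :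
    suppFn K (c • u) = c * suppFn K u := by
  obtain ⟨x, hx, h⟩ := supp_attained K u
  apply le_antisymm
  · refine supp_le K _ fun y hy => ?_
    rw [real_inner_smul_left]
    exact mul_le_mul_of_nonneg_left (le_supp K u hy) hc
  · rw [h, ← real_inner_smul_left]
    exact le_supp K _ hx

lemma supp_bound (K : ConvexBody (Eucl n)) :
    ∃ C : ℝ, 0 ≤ C ∧ ∀ u, |suppFn K u| ≤ C * ‖u‖ := by
  obtain ⟨C, hC⟩ := K.isBounded.exists_norm_le
  have hC0 : 0 ≤ C := by
    obtain ⟨x, hx⟩ := K.nonempty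
    exact (norm_nonneg x).trans (hC x hx)
  refine ⟨C, hC0, fun u => ?_⟩
  obtain ⟨x, hx, h⟩ := supp_attained K u
  rw [h, mul_comm]
  exact (abs_real_inner_le_norm u x).trans
    (mul_le_mul_of_nonneg_left (hC x hx) (norm_nonneg u))

lemma supp_continuous (K : ConvexBody (Eucl n)) : Continuous (suppFn K) := by
  obtain ⟨C, hC0, hC⟩ := supp_bound K
  refine (LipschitzWith.of_le_add_mul (K := ⟨C, hC0⟩) fun u v => ?_).continuous
  have h1 := supp_add_le K v (u - v)
  have h2 := (le_abs_self _).trans (hC (u - v))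
  rw [add_sub_cancel] at h1
  rw [dist_eq_norm]
  exact h1.trans (by gcongr; exact h2)

lemma exists_near (K L : ConvexBody (Eucl n)) (δ : ℝ) (hδ : 0 ≤ δ)
    (h : ∀ u : Eucl n, ‖u‖ = 1 → suppFn K u ≤ suppFn L u + δ) :
    ∀ y ∈ (K : Set (Eucl n)), ∃ z ∈ (L : Set (Eucl n)), dist y z ≤ δ := by
  intro y hy
  obtain ⟨z, hz, hmin⟩ := exists_norm_eq_iInf_of_complete_convex L.nonempty
    L.isCompact.isComplete L.convex y
  rw [norm_eq_iInf_iff_real_inner_le_zero L.convex hz] at hmin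
  refine ⟨z, hz, ?_⟩
  rw [dist_eq_norm]
  by_cases h0 : ‖y - z‖ = 0
  · rw [h0]; exact hδ
  have hpos : 0 < ‖y - z‖ := lt_of_le_of_ne (norm_nonneg _) (Ne.symm h0)
  have h1 := h (‖y - z‖⁻¹ • (y - z)) (by
    rw [norm_smul, norm_inv, norm_norm, inv_mul_cancel₀ h0])
  rw [supp_smul _ _ (by positivity), supp_smul _ _ (by positivity)] at h1
  have h2 : suppFn L (y - z) ≤ ⟪y - z, z⟫ := supp_le L _ fun w hw => by
    have := hmin w hw
    rw [inner_sub_right] at this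
    linarith
  have h3 := le_supp K (y - z) hy
  have h4 : suppFn K (y - z) ≤ suppFn L (y - z) + δ * ‖y - z‖ := by
    have := mul_le_mul_of_nonneg_left h1 hpos.le
    rw [mul_add, ← mul_assoc, ← mul_assoc, mul_inv_cancel₀ h0] at this
    linarith
  have h5 : ‖y - z‖ * ‖y - z‖ = ⟪y - z, y⟫ - ⟪y - z, z⟫ := by
    rw [← inner_sub_right, real_inner_self_eq_norm_mul_norm]
  have h6 : ‖y - z‖ * ‖y - z‖ ≤ δ * ‖y - z‖ := by linarith
  exact le_of_mul_le_mul_right h6 hpos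

lemma dist_le_of_supp (K L : ConvexBody (Eucl n)) (δ : ℝ) (hδ : 0 ≤ δ)
    (h : ∀ u : Eucl n, ‖u‖ = 1 → |suppFn K u - suppFn L u| ≤ δ) : dist K L ≤ δ := by
  rw [← ConvexBody.hausdorffDist_coe]
  refine Metric.hausdorffDist_le_of_mem_dist hδ (exists_near K L δ hδ fun u hu => ?_)
    (exists_near L K δ hδ fun u hu => ?_)
  · have := abs_le.1 (h u hu); linarith
  · have := abs_le.1 (h u hu); linarith

lemma eq_of_supp (K L : ConvexBody (Eucl n))
    (h : ∀ u : Eucl n, ‖u‖ = 1 → suppFn K u = suppFn L u) : K = L :=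
  dist_le_zero.1 (dist_le_of_supp K L 0 le_rfl fun u hu => by rw [h u hu]; simp)

lemma supp_sub_le_dist (K L : ConvexBody (Eucl n)) (u : Eucl n) (hu : ‖u‖ = 1) :
    suppFn K u - suppFn L u ≤ dist K L := by
  obtain ⟨x, hx, h⟩ := supp_attained K u
  refine le_of_forall_pos_le_add fun ε hε => ?_
  obtain ⟨y, hy, hd⟩ := Metric.exists_dist_lt_of_hausdorffDist_lt (r := dist K L + ε) hx
    (by rw [ConvexBody.hausdorffDist_coe]; linarith) ConvexBody.hausdorffEDist_ne_top
  have h1 := le_supp L u hy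
  have h2 := real_inner_le_norm u (x - y)
  rw [hu, one_mul, ← dist_eq_norm, inner_sub_right] at h2
  linarith

lemma abs_supp_sub_le_dist (K L : ConvexBody (Eucl n)) (u : Eucl n) (hu : ‖u‖ = 1) :
    |suppFn K u - suppFn L u| ≤ dist K L := by
  refine abs_le.2 ⟨?_, supp_sub_le_dist K L u hu⟩
  have := supp_sub_le_dist L K u hu
  rw [dist_comm] at this
  linarith

lemma supp_add (K L : ConvexBody (Eucl n)) (u : Eucl n) :
    suppFn (K + L) u = suppFn K u + suppFn L u := by
  apply le_antisymm
  · refine supp_le _ _ ?_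
    rw [ConvexBody.coe_add]
    rintro _ ⟨x, hx, y, hy, rfl⟩
    change (⟪u, x + y⟫ : ℝ) ≤ _
    rw [inner_add_right]
    exact add_le_add (le_supp K u hx) (le_supp L u hy)
  · obtain ⟨x, hx, h⟩ := supp_attained K u
    obtain ⟨y, hy, h'⟩ := supp_attained L u
    rw [h, h', ← inner_add_right]
    exact le_supp _ _ (by rw [ConvexBody.coe_add]; exact Set.add_mem_add hx hy)

lemma supp_csmul (K : ConvexBody (Eucl n)) (c : ℝ) (hc : 0 < c) (u : Eucl n) :
    suppFn (c • K) u = c * suppFn K u := by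
  apply le_antisymm
  · refine supp_le _ _ ?_
    rw [ConvexBody.coe_smul]
    rintro _ ⟨x, hx, rfl⟩
    change (⟪u, c • x⟫ : ℝ) ≤ _
    rw [real_inner_smul_right]
    exact mul_le_mul_of_nonneg_left (le_supp K u hx) hc.le
  · obtain ⟨x, hx, h⟩ := supp_attained K u
    rw [h, ← real_inner_smul_right]
    exact le_supp _ _ (by rw [ConvexBody.coe_smul]; exact Set.smul_mem_smul_set hx)

lemma supp_translate (x : Eucl n) (K K' : ConvexBody (Eucl n))
    (h : (K' : Set (Eucl n)) = (fun y => x + y) '' (K : Set (Eucl n))) (u : Eucl n) :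
    suppFn K' u = suppFn K u + ⟪u, x⟫ := by
  apply le_antisymm
  · refine supp_le _ _ ?_
    rw [h]
    rintro _ ⟨y, hy, rfl⟩
    change (⟪u, x + y⟫ : ℝ) ≤ _
    rw [inner_add_right]
    linarith [le_supp K u hy]
  · obtain ⟨y, hy, h'⟩ := supp_attained K u
    rw [h', add_comm, ← inner_add_right]
    exact le_supp _ _ (by rw [h]; exact ⟨y, hy, rfl⟩)

lemma supp_rot (g : Eucl n ≃ₗᵢ[ℝ] Eucl n) (K K' : ConvexBody (Eucl n))
    (h : (K' : Set (Eucl n)) = g '' (K : Set (Eucl n))) (u : Eucl n) :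
    suppFn K' u = suppFn K (g.symm u) := by
  have key : ∀ y, (⟪u, g y⟫ : ℝ) = ⟪g.symm u, y⟫ := fun y => by
    rw [← g.inner_map_map (g.symm u) y, g.apply_symm_apply]
  apply le_antisymm
  · refine supp_le _ _ ?_
    rw [h]
    rintro _ ⟨y, hy, rfl⟩
    rw [key]
    exact le_supp K _ hy
  · obtain ⟨y, hy, h'⟩ := supp_attained K (g.symm u)
    rw [h', ← key]
    exact le_supp _ _ (by rw [h]; exact ⟨y, hy, rfl⟩)

lemma supp_valuation (K L M N : ConvexBody (Eucl n))
    (hc : Convex ℝ ((K : Set (Eucl n)) ∪ L))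
    (hM : (M : Set (Eucl n)) = (K : Set (Eucl n)) ∪ L)
    (hN : (N : Set (Eucl n)) = (K : Set (Eucl n)) ∩ L) (u : Eucl n) :
    suppFn K u + suppFn L u = suppFn M u + suppFn N u := by
  obtain ⟨x, hx, hx'⟩ := supp_attained K u
  obtain ⟨y, hy, hy'⟩ := supp_attained L u
  have hMm : suppFn M u = max (suppFn K u) (suppFn L u) := by
    apply le_antisymm
    · refine supp_le _ _ ?_
      rw [hM]
      rintro z (hz | hz)
      · exact le_max_of_le_left (le_supp K u hz)
      · exact le_max_of_le_right (le_supp L u hz)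
    · refine max_le ?_ ?_
      · rw [hx']; exact le_supp _ _ (by rw [hM]; exact Or.inl hx)
      · rw [hy']; exact le_supp _ _ (by rw [hM]; exact Or.inr hy)
  have hNm : suppFn N u = min (suppFn K u) (suppFn L u) := by
    apply le_antisymm
    · refine supp_le _ _ ?_
      rw [hN]
      rintro z ⟨hz, hz'⟩
      exact le_min (le_supp K u hz) (le_supp L u hz')
    · have hseg := hc.segment_subset (Or.inl hx) (Or.inr hy)
      have hpre := (convex_segment (𝕜 := ℝ) x y).isPreconnected
      obtain ⟨z, hz, hzK, hzL⟩ := isPreconnected_closed_iff.1 hpre _ _ K.isClosed L.isClosed hseg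
        ⟨x, left_mem_segment ℝ x y, hx⟩ ⟨y, right_mem_segment ℝ x y, hy⟩
      have h1 : min (suppFn K u) (suppFn L u) ≤ ⟪u, z⟫ := by
        obtain ⟨a, b, ha, hb, hab, rfl⟩ := hz
        rw [inner_add_right, real_inner_smul_right, real_inner_smul_right, ← hx', ← hy']
        have e1 := mul_le_mul_of_nonneg_left (min_le_left (suppFn K u) (suppFn L u)) ha
        have e2 := mul_le_mul_of_nonneg_left (min_le_right (suppFn K u) (suppFn L u)) hb
        have : min (suppFn K u) (suppFn L u) = a * min (suppFn K u) (suppFn L u)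
          + b * min (suppFn K u) (suppFn L u) := by rw [← add_mul, hab, one_mul]
        linarith
      exact h1.trans (le_supp _ _ (by rw [hN]; exact ⟨hzK, hzL⟩))
  rw [hMm, hNm, max_add_min]

/-- A sublinear function is the support function of a convex body. -/
lemma exists_body (F : Eucl n → ℝ) (C : ℝ) (hC0 : 0 ≤ C)
    (hhom : ∀ c : ℝ, 0 < c → ∀ x, F (c • x) = c * F x)
    (hadd : ∀ x y, F (x + y) ≤ F x + F y) (hC : ∀ x, F x ≤ C * ‖x‖) :
    ∃ K : ConvexBody (Eucl n), ∀ v, v ≠ 0 → suppFn K v = F v := by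
  have F0 : F 0 = 0 := by
    have := hhom 2 (by norm_num) 0
    rw [smul_zero] at this; linarith
  have key : ∀ v : Eucl n, v ≠ 0 → ∃ y : Eucl n, (∀ x, (⟪x, y⟫ : ℝ) ≤ F x) ∧ ⟪v, y⟫ = F v := by
    intro v hv
    obtain ⟨g, hg, hgF⟩ := exists_extension_of_le_sublinear
      (LinearPMap.mkSpanSingleton (K := ℝ) v (F v) hv) F hhom hadd (by
        rintro ⟨x, hx⟩
        obtain ⟨t, rfl⟩ := Submodule.mem_span_singleton.1 hx
        erw [LinearPMap.mkSpanSingleton'_apply]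
        change t • F v ≤ F (t • v)
        rw [smul_eq_mul]
        rcases lt_trichotomy t 0 with ht | ht | ht
        · have h1 := hhom (-t) (by linarith) v
          have h2 := hadd (t • v) ((-t) • v)
          rw [← add_smul, add_neg_cancel, zero_smul, F0, h1] at h2
          linarith
        · simp [ht, F0]
        · rw [hhom t ht])
    refine ⟨(InnerProductSpace.toDual ℝ (Eucl n)).symm (LinearMap.toContinuousLinearMap g),
      fun x => ?_, ?_⟩
    · rw [real_inner_comm, InnerProductSpace.toDual_symm_apply]
      exact hgF x
    · rw [real_inner_comm, InnerProductSpace.toDual_symm_apply]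
      have := hg ⟨v, Submodule.mem_span_singleton_self v⟩
      have h2 := LinearPMap.mkSpanSingleton_apply ℝ ℝ (σ := RingHom.id ℝ) hv (F v)
      exact this.trans h2
  let S : Set (Eucl n) := {y | ∀ x, (⟪x, y⟫ : ℝ) ≤ F x}
  have hSc : Convex ℝ S := by
    intro y hy z hz a b ha hb hab x
    rw [inner_add_right, real_inner_smul_right, real_inner_smul_right]
    have e1 := mul_le_mul_of_nonneg_left (hy x) ha
    have e2 := mul_le_mul_of_nonneg_left (hz x) hb
    have : F x = a * F x + b * F x := by rw [← add_mul, hab, one_mul]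
    linarith
  have hScl : IsClosed S := by
    have : S = ⋂ x, {y | (⟪x, y⟫ : ℝ) ≤ F x} := by ext; simp [S]
    rw [this]
    exact isClosed_iInter fun x => isClosed_le (by fun_prop) continuous_const
  have hSb : IsCompact S := by
    refine (isCompact_closedBall (0 : Eucl n) C).of_isClosed_subset hScl fun y hy => ?_
    rw [mem_closedBall_zero_iff]
    have h1 := (hy y).trans (hC y)
    rw [real_inner_self_eq_norm_mul_norm] at h1
    by_cases h0 : y = 0
    · rw [h0, norm_zero]; exact hC0
    · exact le_of_mul_le_mul_right h1 (norm_pos_iff.2 h0)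
  by_cases hne : ∃ v : Eucl n, v ≠ 0
  · obtain ⟨v, hv⟩ := hne
    refine ⟨⟨S, hSc, hSb, ?_⟩, fun v hv => ?_⟩
    · obtain ⟨y, hy, -⟩ := key v hv
      exact ⟨y, hy⟩
    · apply le_antisymm
      · exact supp_le _ _ fun x hx => hx v
      · obtain ⟨y, hy, h⟩ := key v hv
        rw [← h]
        exact le_supp _ _ hy
  · push Not at hne
    exact ⟨0, fun v hv => absurd (hne v) hv⟩

/-- Rotation by `z` in the plane spanned by `p`, `q`. -/
def rotLin (p q : Eucl n) (z : ℂ) : Eucl n →ₗ[ℝ] Eucl n where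
  toFun u := u + ((z.re - 1) * ⟪p, u⟫ - z.im * ⟪q, u⟫) • p
    + (z.im * ⟪p, u⟫ + (z.re - 1) * ⟪q, u⟫) • q
  map_add' u v := by
    simp only [inner_add_right]
    module
  map_smul' c u := by
    simp only [real_inner_smul_right, RingHom.id_apply]
    module

lemma rotLin_apply (p q : Eucl n) (z : ℂ) (u : Eucl n) :
    rotLin p q z u = u + ((z.re - 1) * ⟪p, u⟫ - z.im * ⟪q, u⟫) • p
    + (z.im * ⟪p, u⟫ + (z.re - 1) * ⟪q, u⟫) • q := rfl

structure ON (p q : Eucl n) : Prop where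
  hp : ‖p‖ = 1
  hq : ‖q‖ = 1
  hpq : (⟪p, q⟫ : ℝ) = 0

namespace ON

lemma pp {p q : Eucl n} (h : ON p q) : (⟪p, p⟫ : ℝ) = 1 := by rw [real_inner_self_eq_norm_sq, h.hp]; norm_num
lemma qq {p q : Eucl n} (h : ON p q) : (⟪q, q⟫ : ℝ) = 1 := by rw [real_inner_self_eq_norm_sq, h.hq]; norm_num
lemma qp {p q : Eucl n} (h : ON p q) : (⟪q, p⟫ : ℝ) = 0 := by rw [real_inner_comm, h.hpq]

lemma inner_p_rot {p q : Eucl n} (h : ON p q) (z : ℂ) (u : Eucl n) :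
    (⟪p, rotLin p q z u⟫ : ℝ) = z.re * ⟪p, u⟫ - z.im * ⟪q, u⟫ := by
  rw [rotLin_apply, inner_add_right, inner_add_right, real_inner_smul_right,
    real_inner_smul_right, h.pp, h.hpq]
  ring

lemma inner_q_rot {p q : Eucl n} (h : ON p q) (z : ℂ) (u : Eucl n) :
    (⟪q, rotLin p q z u⟫ : ℝ) = z.im * ⟪p, u⟫ + z.re * ⟪q, u⟫ := by
  rw [rotLin_apply, inner_add_right, inner_add_right, real_inner_smul_right,
    real_inner_smul_right, h.qq, h.qp]
  ring

lemma rot_mul {p q : Eucl n} (h : ON p q) (z w : ℂ) (u : Eucl n) :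
    rotLin p q (z * w) u = rotLin p q z (rotLin p q w u) := by
  rw [rotLin_apply p q z, h.inner_p_rot, h.inner_q_rot, rotLin_apply, rotLin_apply,
    Complex.mul_re, Complex.mul_im]
  module

lemma rot_one {p q : Eucl n} (_h : ON p q) (u : Eucl n) : rotLin p q 1 u = u := by
  simp [rotLin_apply]

lemma norm_rot {p q : Eucl n} (h : ON p q) (z : Circle) (u : Eucl n) : ‖rotLin p q z u‖ = ‖u‖ := by
  have hz : (z : ℂ).re * (z : ℂ).re + (z : ℂ).im * (z : ℂ).im = 1 := by
    rw [← Complex.normSq_apply, Circle.normSq_coe]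
  have : (⟪rotLin p q z u, rotLin p q z u⟫ : ℝ) = ⟪u, u⟫ := by
    have key : ∀ w : Eucl n, (⟪rotLin p q z u, w⟫ : ℝ) = ⟪u, w⟫
        + (((z : ℂ).re - 1) * ⟪p, u⟫ - (z : ℂ).im * ⟪q, u⟫) * ⟪p, w⟫
        + ((z : ℂ).im * ⟪p, u⟫ + ((z : ℂ).re - 1) * ⟪q, u⟫) * ⟪q, w⟫ := fun w => by
      rw [rotLin_apply, inner_add_left, inner_add_left, real_inner_smul_left,
        real_inner_smul_left]
    rw [key, h.inner_p_rot, h.inner_q_rot, real_inner_comm, key]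
    linear_combination ((⟪p, u⟫ : ℝ) ^ 2 + (⟪q, u⟫ : ℝ) ^ 2) * hz
  rw [real_inner_self_eq_norm_sq, real_inner_self_eq_norm_sq] at this
  exact (sq_eq_sq₀ (norm_nonneg _) (norm_nonneg _)).1 this

/-- Rotation as linear isometry. -/
def rot {p q : Eucl n} (h : ON p q) (z : Circle) : Eucl n ≃ₗᵢ[ℝ] Eucl n where
  toLinearEquiv := LinearEquiv.ofLinearMap (rotLin p q z) (rotLin p q (z⁻¹ : Circle))
    (by
      ext1 u
      change rotLin p q z (rotLin p q (z⁻¹ : Circle) u) = u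
      rw [← h.rot_mul, ← Circle.coe_mul, mul_inv_cancel, Circle.coe_one, h.rot_one])
    (by
      ext1 u
      change rotLin p q (z⁻¹ : Circle) (rotLin p q z u) = u
      rw [← h.rot_mul, ← Circle.coe_mul, inv_mul_cancel, Circle.coe_one, h.rot_one])
  norm_map' u := h.norm_rot z u

lemma rot_apply {p q : Eucl n} (h : ON p q) (z : Circle) (u : Eucl n) : h.rot z u = rotLin p q z u := rfl

end ON

lemma det_isometry (g : Eucl n ≃ₗᵢ[ℝ] Eucl n) :
    LinearEquiv.det g.toLinearEquiv = 1 ∨ LinearEquiv.det g.toLinearEquiv = -1 := by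
  have h1 := g.toLinearIsometry.normDet_eq_one
  rw [LinearMap.normDet_eq_abs_det] at h1
  have h2 : |((LinearEquiv.det g.toLinearEquiv : ℝˣ) : ℝ)| = 1 := by
    rw [LinearEquiv.coe_det]; exact h1
  rcases (abs_eq (by norm_num)).1 h2 with h | h
  · left; ext; exact h
  · right; ext; simpa using h

lemma det_trans (g k : Eucl n ≃ₗᵢ[ℝ] Eucl n) :
    LinearEquiv.det (g.trans k).toLinearEquiv =
      LinearEquiv.det k.toLinearEquiv * LinearEquiv.det g.toLinearEquiv := by
  have : (g.trans k).toLinearEquiv = k.toLinearEquiv * g.toLinearEquiv := rfl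
  rw [this, map_mul]

lemma det_symm (g : Eucl n ≃ₗᵢ[ℝ] Eucl n) :
    LinearEquiv.det g.symm.toLinearEquiv = (LinearEquiv.det g.toLinearEquiv)⁻¹ := by
  have : g.symm.toLinearEquiv = (g.toLinearEquiv)⁻¹ := rfl
  rw [this, map_inv]

lemma ON.det_rot {p q : Eucl n} (h : ON p q) (z : Circle) :
    LinearEquiv.det (h.rot z).toLinearEquiv = 1 := by
  let w : Circle := Circle.exp (Complex.arg z / 2)
  have hw : w * w = z := by
    rw [← Circle.exp_add, add_halves, Circle.exp_arg]
  have : h.rot z = (h.rot w).trans (h.rot w) := by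
    ext1 u
    change rotLin p q z u = rotLin p q w (rotLin p q w u)
    rw [← h.rot_mul, ← Circle.coe_mul, hw]
  rw [this, det_trans]
  rcases det_isometry (h.rot w) with h | h <;> rw [h] <;> simp

set_option maxHeartbeats 1000000 in
/-- Invariance under one reflection, by averaging over rotations of the plane `p, q`. -/
lemma map_conj_eq {p q : Eucl n} (h : ON p q) (ν : Measure (Eucl n)) [IsFiniteMeasure ν]
    (hinv : ∀ z : Circle, ν.map (h.rot z) = ν) (σ : Eucl n ≃ₗᵢ[ℝ] Eucl n)
    (hσ : ∀ u, σ u = u - (2 * ⟪q, u⟫ : ℝ) • q) : ν.map σ = ν := by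
  let _ : MeasurableSpace Circle := borel Circle
  have : BorelSpace Circle := ⟨rfl⟩
  let m : Measure Circle := Measure.haar
  have hcont : Continuous fun x : Circle × Eucl n => rotLin p q x.1 x.2 := by
    simp only [rotLin_apply]
    have : Continuous fun x : Circle × Eucl n => (x.1 : ℂ) := by fun_prop
    have h1 : Continuous fun x : Circle × Eucl n => (x.1 : ℂ).re := Complex.continuous_re.comp this
    have h2 : Continuous fun x : Circle × Eucl n => (x.1 : ℂ).im := Complex.continuous_im.comp this
    fun_prop
  have : IsFiniteMeasure (ν.map σ) := Measure.isFiniteMeasure_map ν σ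
  have hcu : ∀ z : Circle, Continuous fun u : Eucl n => rotLin p q z u := fun z =>
    (rotLin p q z).continuous_of_finiteDimensional
  have hcz : ∀ u : Eucl n, Continuous fun z : Circle => rotLin p q z u := fun u => by
    simp only [rotLin_apply]
    have : Continuous fun x : Circle => (x : ℂ) := by fun_prop
    have h1 : Continuous fun x : Circle => (x : ℂ).re := Complex.continuous_re.comp this
    have h2 : Continuous fun x : Circle => (x : ℂ).im := Complex.continuous_im.comp this
    fun_prop
  have avg : ∀ f : BoundedContinuousFunction (Eucl n) ℝ, ∀ ρ : Measure (Eucl n), IsFiniteMeasure ρ →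
      (∀ z : Circle, ∫ u, f (rotLin p q z u) ∂ρ = ∫ u, f u ∂ρ) →
      m.real Set.univ * ∫ u, f u ∂ρ = ∫ u, ∫ z : Circle, f (rotLin p q z u) ∂m ∂ρ := by
    intro f ρ _ hρ
    rw [← integral_integral_swap]
    · simp_rw [hρ]
      rw [integral_const, smul_eq_mul]
    · refine Integrable.of_bound (C := ‖f‖) ?_ ?_
      · exact (f.continuous.comp hcont).aestronglyMeasurable
      · exact Filter.Eventually.of_forall fun x => f.norm_coe_le_norm _
  have hm : m.real Set.univ ≠ 0 := by
    rw [Measure.real, ENNReal.toReal_ne_zero]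
    exact ⟨isOpen_univ.measure_ne_zero m Set.univ_nonempty, measure_ne_top _ _⟩
  have hν : ∀ f : Eucl n → ℝ, Continuous f → ∀ z : Circle,
      ∫ u, f (rotLin p q z u) ∂ν = ∫ u, f u ∂ν := by
    intro f hf z
    conv_rhs => rw [← hinv z]
    rw [integral_map (h.rot z).continuous.aemeasurable hf.aestronglyMeasurable]
    rfl
  have hσrot : ∀ (z : Circle) u, rotLin p q z (σ u) = σ (rotLin p q (z⁻¹ : Circle) u) := by
    intro z u
    have e1 : (⟪p, σ u⟫ : ℝ) = ⟪p, u⟫ := by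
      rw [hσ, inner_sub_right, real_inner_smul_right, h.hpq]; ring
    have e2 : (⟪q, σ u⟫ : ℝ) = -⟪q, u⟫ := by
      rw [hσ, inner_sub_right, real_inner_smul_right, h.qq]; ring
    rw [hσ (rotLin p q _ u), h.inner_q_rot, rotLin_apply, e1, e2, hσ, rotLin_apply,
      Circle.coe_inv_eq_conj, Complex.conj_re, Complex.conj_im]
    module
  have hpt : ∀ (f : BoundedContinuousFunction (Eucl n) ℝ) (u : Eucl n),
      ∫ z : Circle, f (rotLin p q z (σ u)) ∂m = ∫ z : Circle, f (rotLin p q z u) ∂m := by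
    intro f u
    have : ∃ c : Circle, σ u = rotLin p q c u := by
      let ζ : ℂ := ⟨⟪p, u⟫, ⟪q, u⟫⟩
      by_cases hζ : ζ = 0
      · refine ⟨1, ?_⟩
        have : (⟪q, u⟫ : ℝ) = 0 := congrArg Complex.im hζ
        rw [hσ, Circle.coe_one, h.rot_one, this]; simp
      · have hmem : ‖(starRingEnd ℂ) ζ / ζ‖ = 1 := by
          rw [norm_div, RCLike.norm_conj, div_self (norm_ne_zero_iff.2 hζ)]
        refine ⟨⟨(starRingEnd ℂ) ζ / ζ, mem_sphere_zero_iff_norm.2 hmem⟩, ?_⟩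
        have hc : ((starRingEnd ℂ) ζ / ζ) * ζ = (starRingEnd ℂ) ζ := div_mul_cancel₀ _ hζ
        have c1 := congrArg Complex.re hc
        have c2 := congrArg Complex.im hc
        rw [Complex.mul_re, Complex.conj_re] at c1
        rw [Complex.mul_im, Complex.conj_im] at c2
        change _ = rotLin p q ((starRingEnd ℂ) ζ / ζ) u
        generalize (starRingEnd ℂ) ζ / ζ = c at *
        change c.re * (⟪p, u⟫ : ℝ) - c.im * (⟪q, u⟫ : ℝ) = ⟪p, u⟫ at c1
        change c.re * (⟪q, u⟫ : ℝ) + c.im * (⟪p, u⟫ : ℝ) = -⟪q, u⟫ at c2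
        have d1 : (c.re - 1) * (⟪p, u⟫ : ℝ) - c.im * ⟪q, u⟫ = 0 := by linarith
        have d2 : c.im * (⟪p, u⟫ : ℝ) + (c.re - 1) * ⟪q, u⟫ = - (2 * ⟪q, u⟫) := by linarith
        rw [hσ, rotLin_apply, d1, d2]
        module
    obtain ⟨c, hc⟩ := this
    rw [hc]
    simp_rw [← h.rot_mul, ← Circle.coe_mul]
    exact integral_mul_right_eq_self (fun z : Circle => f (rotLin p q z u)) c
  refine ext_of_forall_integral_eq_of_IsFiniteMeasure fun f => ?_
  have hmap : ∀ f : Eucl n → ℝ, Continuous f →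
      ∫ u, f u ∂(ν.map σ) = ∫ u, f (σ u) ∂ν := fun f hf =>
    integral_map σ.continuous.aemeasurable hf.aestronglyMeasurable
  have hz : ∀ z : Circle, ∫ u, f (rotLin p q z u) ∂(ν.map σ) = ∫ u, f u ∂(ν.map σ) := by
    intro z
    have hcz' : Continuous fun u => f (rotLin p q z u) := f.continuous.comp (hcu z)
    rw [hmap _ hcz', hmap _ f.continuous]
    simp_rw [hσrot]
    exact hν (fun u => f (σ u)) (f.continuous.comp σ.continuous) z⁻¹
  have h1 := avg f (ν.map σ) inferInstance hz
  have h2 := avg f ν inferInstance (hν f f.continuous)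
  have h3 : ∫ u, ∫ z : Circle, f (rotLin p q z u) ∂m ∂(ν.map σ)
      = ∫ u, ∫ z : Circle, f (rotLin p q z u) ∂m ∂ν := by
    have hc2 : Continuous fun u => ∫ z : Circle, f (rotLin p q z u) ∂m := by
      refine continuous_of_dominated (bound := fun _ => ‖f‖) ?_ ?_ ?_ ?_
      · intro u
        exact (f.continuous.comp (hcz u)).aestronglyMeasurable
      · exact fun u => Filter.Eventually.of_forall fun z => f.norm_coe_le_norm _
      · exact integrable_const _
      · exact Filter.Eventually.of_forall fun z =>
          f.continuous.comp (hcu z)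
    rw [integral_map σ.continuous.aemeasurable hc2.aestronglyMeasurable]
    simp_rw [hpt]
  exact mul_left_cancel₀ hm (by rw [h1, h2, h3])

lemma exists_unit_orth (S : Submodule ℝ (Eucl n)) (h : Module.finrank ℝ S < n) :
    ∃ q : Eucl n, ‖q‖ = 1 ∧ ∀ x ∈ S, (⟪x, q⟫ : ℝ) = 0 := by
  have hne : Sᗮ ≠ ⊥ := by
    intro hb
    rw [Submodule.orthogonal_eq_bot_iff] at hb
    rw [hb, finrank_top, finrank_euclideanSpace_fin] at h
    exact lt_irrefl _ h
  obtain ⟨v, hv, hv0⟩ := Submodule.exists_mem_ne_zero_of_ne_bot hne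
  refine ⟨‖v‖⁻¹ • v, ?_, fun x hx => ?_⟩
  · rw [norm_smul, norm_inv, norm_norm, inv_mul_cancel₀ (norm_ne_zero_iff.2 hv0)]
  · rw [real_inner_smul_right, hv x hx, mul_zero]

lemma exists_unit_orth_one (hn : 2 ≤ n) (p : Eucl n) :
    ∃ q : Eucl n, ‖q‖ = 1 ∧ (⟪p, q⟫ : ℝ) = 0 := by
  obtain ⟨q, hq, h⟩ := exists_unit_orth (Submodule.span ℝ {p})
    (by
      have := finrank_span_finset_le_card (R := ℝ) ({p} : Finset (Eucl n))
      rw [Set.finrank, Finset.coe_singleton, Finset.card_singleton] at this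
      omega)
  exact ⟨q, hq, h p (Submodule.mem_span_singleton_self p)⟩

lemma exists_unit_orth_two (hn : 3 ≤ n) (e q : Eucl n) :
    ∃ p : Eucl n, ‖p‖ = 1 ∧ (⟪e, p⟫ : ℝ) = 0 ∧ (⟪q, p⟫ : ℝ) = 0 := by
  obtain ⟨p, hp, h⟩ := exists_unit_orth (Submodule.span ℝ {e, q}) (by
    have := finrank_span_finset_le_card (R := ℝ) ({e, q} : Finset (Eucl n))
    have h2 := Finset.card_le_two (a := e) (b := q)
    rw [Set.finrank, Finset.coe_insert, Finset.coe_singleton] at this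
    omega)
  exact ⟨p, hp, h e (Submodule.subset_span (by simp)), h q (Submodule.subset_span (by simp))⟩

lemma exists_unit (hn : 2 ≤ n) (x : Eucl n) :
    ∃ p : Eucl n, ‖p‖ = 1 ∧ x = (⟪p, x⟫ : ℝ) • p := by
  by_cases hx : x = 0
  · obtain ⟨q, hq, -⟩ := exists_unit_orth_one hn (0 : Eucl n)
    exact ⟨q, hq, by simp [hx]⟩
  · have h0 := norm_ne_zero_iff.2 hx
    refine ⟨‖x‖⁻¹ • x, ?_, ?_⟩
    · rw [norm_smul, norm_inv, norm_norm, inv_mul_cancel₀ h0]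
    · rw [real_inner_smul_left, real_inner_self_eq_norm_sq, smul_smul]
      have : ‖x‖⁻¹ * ‖x‖ ^ 2 * ‖x‖⁻¹ = 1 := by field_simp
      rw [this, one_smul]

lemma exists_plane (hn : 2 ≤ n) (x y : Eucl n) :
    ∃ p q : Eucl n, ON p q ∧ x = (⟪p, x⟫ : ℝ) • p + (⟪q, x⟫ : ℝ) • q ∧
      y = (⟪p, y⟫ : ℝ) • p + (⟪q, y⟫ : ℝ) • q := by
  obtain ⟨p, hp, hx⟩ := exists_unit hn x
  have hpp : (⟪p, p⟫ : ℝ) = 1 := by rw [real_inner_self_eq_norm_sq, hp]; norm_num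
  have : ∃ q : Eucl n, ‖q‖ = 1 ∧ (⟪p, q⟫ : ℝ) = 0 ∧
      y - (⟪p, y⟫ : ℝ) • p = (⟪q, y - (⟪p, y⟫ : ℝ) • p⟫ : ℝ) • q := by
    have hperp : (⟪p, y - (⟪p, y⟫ : ℝ) • p⟫ : ℝ) = 0 := by
      rw [inner_sub_right, real_inner_smul_right, hpp]; ring
    generalize y - (⟪p, y⟫ : ℝ) • p = y' at hperp ⊢
    by_cases h0 : y' = 0
    · obtain ⟨q, hq, h⟩ := exists_unit_orth_one hn p
      exact ⟨q, hq, h, by simp [h0]⟩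
    · obtain ⟨q, hq, h⟩ := exists_unit hn y'
      refine ⟨q, hq, ?_, h⟩
      rw [h, real_inner_smul_right] at hperp
      rcases mul_eq_zero.1 hperp with h1 | h1
      · rw [h1, zero_smul] at h; exact absurd h h0
      · exact h1
  obtain ⟨q, hq, hpq, hy⟩ := this
  have hqp : (⟪q, p⟫ : ℝ) = 0 := by rw [real_inner_comm, hpq]
  refine ⟨p, q, ⟨hp, hq, hpq⟩, ?_, ?_⟩
  · have : (⟪q, x⟫ : ℝ) = 0 := by rw [hx, real_inner_smul_right, hqp, mul_zero]
    rw [this, zero_smul, add_zero]; exact hx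
  · rw [inner_sub_right, real_inner_smul_right, hqp, mul_zero, sub_zero] at hy
    rw [← hy]; abel

lemma integral_inv {μ : Measure (Eucl n)} (k : Eucl n ≃ₗᵢ[ℝ] Eucl n) (hk : μ.map k = μ)
    (f : Eucl n → ℝ) : ∫ u, f (k u) ∂μ = ∫ u, f u ∂μ := by
  conv_rhs => rw [← hk]
  exact (k.toHomeomorph.measurableEmbedding.integral_map f).symm

def Zonal (e : Eucl n) (μ : Measure (Eucl n)) : Prop :=
  ∀ g : Eucl n ≃ₗᵢ[ℝ] Eucl n,
      g e = e → LinearEquiv.det g.toLinearEquiv = 1 → μ.map g = μ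

lemma integral_indep {e : Eucl n} {μ : Measure (Eucl n)} (hz : Zonal e μ)
    (g g' : Eucl n ≃ₗᵢ[ℝ] Eucl n) (hg : LinearEquiv.det g.toLinearEquiv = 1)
    (hg' : LinearEquiv.det g'.toLinearEquiv = 1) (h : g e = g' e) (f : Eucl n → ℝ) :
    ∫ u, f (g u) ∂μ = ∫ u, f (g' u) ∂μ := by
  have := integral_inv (g.trans g'.symm) (hz _ (by simp [h])
    (by rw [det_trans, det_symm, hg, hg']; simp)) (fun u => f (g' u))
  simpa using this

lemma zonal_full (hn : 3 ≤ n) {e : Eucl n} {μ : Measure (Eucl n)} [IsFiniteMeasure μ]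
    (hz : Zonal e μ) (g : Eucl n ≃ₗᵢ[ℝ] Eucl n) (hg : g e = e) : μ.map g = μ := by
  rcases det_isometry g with h | h
  · exact hz g hg h
  obtain ⟨q, hq, heq⟩ := exists_unit_orth_one (by omega) e
  obtain ⟨p, hp, hep, hqp⟩ := exists_unit_orth_two hn e q
  have hpq : ON p q := ⟨hp, hq, by rw [real_inner_comm, hqp]⟩
  let σ : Eucl n ≃ₗᵢ[ℝ] Eucl n := (Submodule.span ℝ {q})ᗮ.reflection
  have hσ : ∀ u, σ u = u - (2 * ⟪q, u⟫ : ℝ) • q := by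
    intro u
    change (Submodule.span ℝ {q})ᗮ.reflection u = _
    rw [Submodule.reflection_orthogonal_apply, Submodule.reflection_singleton_apply]
    simp only [hq]
    simp
    module
  have hqe : (⟪q, e⟫ : ℝ) = 0 := by rw [real_inner_comm, heq]
  have hpe : (⟪p, e⟫ : ℝ) = 0 := by rw [real_inner_comm, hep]
  have hσe : σ e = e := by rw [hσ, hqe]; simp
  have hσd : LinearEquiv.det σ.toLinearEquiv = -1 := by
    have h1 := (Submodule.span ℝ {q})ᗮ.linearEquiv_det_reflection
    rw [Submodule.orthogonal_orthogonal, finrank_span_singleton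
      (by rw [← norm_ne_zero_iff, hq]; norm_num), pow_one] at h1
    exact h1
  have hσμ : μ.map σ = μ := map_conj_eq hpq μ (fun z => hz _ (by
    rw [ON.rot_apply, rotLin_apply, hqe, hpe]; simp) (hpq.det_rot z)) σ hσ
  have := hz (σ.trans g) (by simp [hσe, hg]) (by rw [det_trans, h, hσd]; simp)
  rw [LinearIsometryEquiv.coe_trans,
    ← Measure.map_map g.continuous.measurable σ.continuous.measurable, hσμ] at this
  exact this

/-- The reflection at the plane spanned by `p, q` can be pulled into the integral. -/
lemma integral_plane_refl (hn : 2 ≤ n) {e : Eucl n} {μ : Measure (Eucl n)} [IsFiniteMeasure μ]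
    (hz : Zonal e μ) {p q : Eucl n} (h : ON p q) (g : Eucl n ≃ₗᵢ[ℝ] Eucl n) (hg : g e = p)
    (f : Eucl n → ℝ) :
    ∫ u, f ((2 * ⟪p, g u⟫ : ℝ) • p + (2 * ⟪q, g u⟫ : ℝ) • q - g u) ∂μ = ∫ u, f (g u) ∂μ := by
  have hv : Orthonormal ℝ ![p, q] := by
    rw [orthonormal_iff_ite]
    intro i j
    fin_cases i <;> fin_cases j <;> simp [h.hp, h.hq, h.hpq, h.qp]
  let P : Submodule ℝ (Eucl n) := Submodule.span ℝ (Set.range ![p, q])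
  have hP : Module.finrank ℝ P = 2 := by
    rw [finrank_span_eq_card hv.linearIndependent]; simp
  have hpP : p ∈ P := Submodule.subset_span ⟨0, rfl⟩
  have hqP : q ∈ P := Submodule.subset_span ⟨1, rfl⟩
  let τ : Eucl n ≃ₗᵢ[ℝ] Eucl n := P.reflection
  have hτ : ∀ u, τ u = (2 * ⟪p, u⟫ : ℝ) • p + (2 * ⟪q, u⟫ : ℝ) • q - u := by
    intro u
    have hproj : P.starProjection u = (⟪p, u⟫ : ℝ) • p + (⟪q, u⟫ : ℝ) • q := by
      refine Submodule.eq_starProjection_of_mem_of_inner_eq_zero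
        (P.add_mem (P.smul_mem _ hpP) (P.smul_mem _ hqP)) ?_
      intro w hw
      induction hw using Submodule.span_induction with
      | mem x hx =>
        obtain ⟨i, rfl⟩ := hx
        fin_cases i
        · change (⟪u - ((⟪p, u⟫ : ℝ) • p + (⟪q, u⟫ : ℝ) • q), p⟫ : ℝ) = 0
          rw [inner_sub_left, inner_add_left, real_inner_smul_left, real_inner_smul_left, h.pp,
            h.qp, real_inner_comm]
          ring
        · change (⟪u - ((⟪p, u⟫ : ℝ) • p + (⟪q, u⟫ : ℝ) • q), q⟫ : ℝ) = 0
          rw [inner_sub_left, inner_add_left, real_inner_smul_left, real_inner_smul_left, h.qq,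
            h.hpq, real_inner_comm]
          ring
      | zero => simp
      | add x y _ _ hx hy => rw [inner_add_right, hx, hy, add_zero]
      | smul a x _ hx => rw [real_inner_smul_right, hx, mul_zero]
    change P.reflection u = _
    rw [Submodule.reflection_apply, hproj]
    module
  have hτp : τ p = p := by rw [hτ, h.pp, h.qp]; module
  let k : Eucl n ≃ₗᵢ[ℝ] Eucl n := (g.trans τ).trans g.symm
  have hk : k e = e := by
    change g.symm (τ (g e)) = e
    rw [hg, hτp, ← hg, g.symm_apply_apply]
  have hkμ : μ.map k = μ := by
    by_cases h3 : 3 ≤ n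
    · exact zonal_full h3 hz k hk
    · refine hz k hk ?_
      have h1 := P.linearEquiv_det_reflection
      have h2 := P.finrank_add_finrank_orthogonal
      rw [hP, finrank_euclideanSpace_fin] at h2
      have h4 : Module.finrank ℝ Pᗮ = 0 := by omega
      rw [h4, pow_zero] at h1
      have h5 : LinearEquiv.det τ.toLinearEquiv = 1 := h1
      rw [det_trans, det_trans, det_symm, h5]
      simp
  rw [← integral_inv k hkμ (fun u => f (g u))]
  refine integral_congr_ae (Filter.Eventually.of_forall fun u => ?_)
  change f _ = f (g (g.symm (τ (g u))))
  rw [g.apply_symm_apply, hτ]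

lemma supp_sym_mono (K : ConvexBody (Eucl n)) (c w : Eucl n) (r s : ℝ) (hr : 0 ≤ r)
    (hrs : r ≤ s) : suppFn K (c + r • w) + suppFn K (c - r • w) ≤
      suppFn K (c + s • w) + suppFn K (c - s • w) := by
  rcases eq_or_lt_of_le (hr.trans hrs) with h0 | hs
  · have : r = 0 := by linarith
    rw [← h0, this]
  · have hs0 := hs.ne'
    have e1 : c + r • w = ((s + r) / (2 * s)) • (c + s • w) + ((s - r) / (2 * s)) • (c - s • w) := by
      match_scalars <;> field_simp <;> ring
    have e2 : c - r • w = ((s - r) / (2 * s)) • (c + s • w) + ((s + r) / (2 * s)) • (c - s • w) := by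
      match_scalars <;> field_simp <;> ring
    have n1 : 0 ≤ (s + r) / (2 * s) := by positivity
    have n2 : 0 ≤ (s - r) / (2 * s) := div_nonneg (by linarith) (by positivity)
    have a1 := supp_add_le K (((s + r) / (2 * s)) • (c + s • w)) (((s - r) / (2 * s)) • (c - s • w))
    have a2 := supp_add_le K (((s - r) / (2 * s)) • (c + s • w)) (((s + r) / (2 * s)) • (c - s • w))
    rw [← e1, supp_smul _ _ n1, supp_smul _ _ n2] at a1
    rw [← e2, supp_smul _ _ n1, supp_smul _ _ n2] at a2
    have hsum : (s + r) / (2 * s) + (s - r) / (2 * s) = 1 := by field_simp; ring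
    calc _ ≤ _ := add_le_add a1 a2
      _ = ((s + r) / (2 * s) + (s - r) / (2 * s)) *
        (suppFn K (c + s • w) + suppFn K (c - s • w)) := by ring
      _ = _ := by rw [hsum, one_mul]

lemma supp_sym_add (K : ConvexBody (Eucl n)) (A B w : Eucl n) (r s t : ℝ) (hr : 0 ≤ r)
    (hrs : r ≤ s + t) : suppFn K (A + B + r • w) + suppFn K (A + B - r • w) ≤
      (suppFn K (A + s • w) + suppFn K (A - s • w))
        + (suppFn K (B + t • w) + suppFn K (B - t • w)) := by
  have h1 := supp_sym_mono K (A + B) w r (s + t) hr hrs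
  have h2 := supp_add_le K (A + s • w) (B + t • w)
  have h3 := supp_add_le K (A - s • w) (B - t • w)
  have e1 : A + s • w + (B + t • w) = A + B + (s + t) • w := by module
  have e2 : A - s • w + (B - t • w) = A + B - (s + t) • w := by module
  rw [e1] at h2
  rw [e2] at h3
  linarith

/-- integrability -/
lemma integrable_supp {μ : Measure (Eucl n)} [IsFiniteMeasure μ]
    (hs : μ (Metric.sphere (0 : Eucl n) 1)ᶜ = 0) (K : ConvexBody (Eucl n))
    (T : Eucl n → Eucl n) (hT : Continuous T) (c : ℝ)
    (hc : ∀ u : Eucl n, ‖u‖ = 1 → ‖T u‖ ≤ c) :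
    Integrable (fun u => suppFn K (T u)) μ := by
  obtain ⟨C, hC0, hC⟩ := supp_bound K
  refine Integrable.of_bound (C := C * c)
    ((supp_continuous K).comp hT).aestronglyMeasurable ?_
  have : ∀ᵐ u ∂μ, u ∈ Metric.sphere (0 : Eucl n) 1 := by
    rw [ae_iff]; exact hs
  filter_upwards [this] with u hu
  rw [mem_sphere_zero_iff_norm] at hu
  rw [Real.norm_eq_abs]
  exact (hC _).trans (mul_le_mul_of_nonneg_left (hc u hu) hC0)

def plA (p q x w : Eucl n) : Eucl n :=
  ((⟪p, x⟫ : ℝ) * ⟪p, w⟫ - (⟪q, x⟫ : ℝ) * ⟪q, w⟫) • p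
    + ((⟪q, x⟫ : ℝ) * ⟪p, w⟫ + (⟪p, x⟫ : ℝ) * ⟪q, w⟫) • q

def plW (p q w : Eucl n) : Eucl n := w - (⟪p, w⟫ : ℝ) • p - (⟪q, w⟫ : ℝ) • q

lemma plA_add (p q x y w : Eucl n) : plA p q (x + y) w = plA p q x w + plA p q y w := by
  simp only [plA, inner_add_right]
  module

lemma plA_cont (p q x : Eucl n) : Continuous (plA p q x) := by
  unfold plA; fun_prop

lemma plW_cont (p q : Eucl n) : Continuous (plW p q) := by
  unfold plW; fun_prop

/-- The homogeneous extension of the convolution. -/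
def conv (μ : Measure (Eucl n)) (R : Eucl n → (Eucl n ≃ₗᵢ[ℝ] Eucl n))
    (K : ConvexBody (Eucl n)) (x : Eucl n) : ℝ :=
  ‖x‖ * ∫ u, suppFn K (R (‖x‖⁻¹ • x) u) ∂μ

section
variable {e : Eucl n} {μ : Measure (Eucl n)} {R : Eucl n → (Eucl n ≃ₗᵢ[ℝ] Eucl n)}

lemma supp_zero (K : ConvexBody (Eucl n)) : suppFn K 0 = 0 := by
  have := supp_smul K 0 le_rfl 0
  simpa using this

lemma conv_plane (hz : Zonal e μ)
    (hR : ∀ v : Eucl n, ‖v‖ = 1 → R v e = v ∧ LinearEquiv.det (R v).toLinearEquiv = 1)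
    (K : ConvexBody (Eucl n)) {p q : Eucl n} (h : ON p q) (x : Eucl n)
    (hx : x = (⟪p, x⟫ : ℝ) • p + (⟪q, x⟫ : ℝ) • q) :
    conv μ R K x = ∫ u, suppFn K (plA p q x (R p u) + ‖x‖ • plW p q (R p u)) ∂μ := by
  by_cases h0 : x = 0
  · subst h0
    simp [conv, plA, supp_zero]
  have hn0 : ‖x‖ ≠ 0 := norm_ne_zero_iff.2 h0
  have hnorm : ‖x‖ ^ 2 = (⟪p, x⟫ : ℝ) ^ 2 + (⟪q, x⟫ : ℝ) ^ 2 := by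
    rw [← real_inner_self_eq_norm_sq]
    conv_lhs => rw [hx]
    rw [inner_add_left, real_inner_smul_left, real_inner_smul_left, inner_add_right,
      inner_add_right, real_inner_smul_right, real_inner_smul_right, real_inner_smul_right,
      real_inner_smul_right, h.pp, h.qq, h.hpq, h.qp]
    ring
  have hv : ‖‖x‖⁻¹ • x‖ = 1 := by
    rw [norm_smul, norm_inv, norm_norm, inv_mul_cancel₀ hn0]
  have hmem : ‖(⟨(⟪p, x⟫ : ℝ) / ‖x‖, (⟪q, x⟫ : ℝ) / ‖x‖⟩ : ℂ)‖ = 1 := by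
    rw [Complex.norm_def, Real.sqrt_eq_one, Complex.normSq_mk]
    field_simp
    linarith
  let z : Circle := ⟨⟨(⟪p, x⟫ : ℝ) / ‖x‖, (⟪q, x⟫ : ℝ) / ‖x‖⟩, mem_sphere_zero_iff_norm.2 hmem⟩
  have hrot : ∀ w, h.rot z w = w + (((⟪p, x⟫ : ℝ) / ‖x‖ - 1) * ⟪p, w⟫ -
      ((⟪q, x⟫ : ℝ) / ‖x‖) * ⟪q, w⟫) • p
    + (((⟪q, x⟫ : ℝ) / ‖x‖) * ⟪p, w⟫ + ((⟪p, x⟫ : ℝ) / ‖x‖ - 1) * ⟪q, w⟫) • q := fun w => rfl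
  have hrp : h.rot z p = ‖x‖⁻¹ • x := by
    rw [hrot, h.pp, h.qp]
    conv_rhs => rw [hx, smul_add, smul_smul, smul_smul]
    rw [← hx]
    module
  unfold conv
  rw [integral_indep hz (R (‖x‖⁻¹ • x)) ((R p).trans (h.rot z)) (hR _ hv).2
    (by rw [det_trans, h.det_rot, (hR p h.hp).2, one_mul])
    (by rw [(hR _ hv).1, LinearIsometryEquiv.trans_apply, (hR p h.hp).1, hrp]),
    ← integral_const_mul]
  refine integral_congr_ae (Filter.Eventually.of_forall fun u => ?_)
  simp only [LinearIsometryEquiv.trans_apply]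
  rw [← supp_smul K _ (norm_nonneg x), hrot]
  congr 1
  unfold plA plW
  generalize R p u = w
  match_scalars <;> field_simp <;> ring

lemma conv_plane' (hn : 2 ≤ n) [IsFiniteMeasure μ] (hz : Zonal e μ)
    (hR : ∀ v : Eucl n, ‖v‖ = 1 → R v e = v ∧ LinearEquiv.det (R v).toLinearEquiv = 1)
    (K : ConvexBody (Eucl n)) {p q : Eucl n} (h : ON p q) (x : Eucl n)
    (hx : x = (⟪p, x⟫ : ℝ) • p + (⟪q, x⟫ : ℝ) • q) :
    conv μ R K x = ∫ u, suppFn K (plA p q x (R p u) - ‖x‖ • plW p q (R p u)) ∂μ := by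
  rw [conv_plane hz hR K h x hx, ← integral_plane_refl hn hz h (R p) (hR p h.hp).1
    (fun w => suppFn K (plA p q x w + ‖x‖ • plW p q w))]
  refine integral_congr_ae (Filter.Eventually.of_forall fun u => ?_)
  beta_reduce
  generalize R p u = w
  have e1 : (⟪p, (2 * ⟪p, w⟫ : ℝ) • p + (2 * ⟪q, w⟫ : ℝ) • q - w⟫ : ℝ) = ⟪p, w⟫ := by
    rw [inner_sub_right, inner_add_right, real_inner_smul_right, real_inner_smul_right,
      h.pp, h.hpq]
    ring
  have e2 : (⟪q, (2 * ⟪p, w⟫ : ℝ) • p + (2 * ⟪q, w⟫ : ℝ) • q - w⟫ : ℝ) = ⟪q, w⟫ := by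
    rw [inner_sub_right, inner_add_right, real_inner_smul_right, real_inner_smul_right,
      h.qq, h.qp]
    ring
  congr 1
  unfold plA plW
  rw [e1, e2]
  module

lemma conv_add (hn : 2 ≤ n) [IsFiniteMeasure μ]
    (hs : μ (Metric.sphere (0 : Eucl n) 1)ᶜ = 0) (hz : Zonal e μ)
    (hR : ∀ v : Eucl n, ‖v‖ = 1 → R v e = v ∧ LinearEquiv.det (R v).toLinearEquiv = 1)
    (K : ConvexBody (Eucl n)) (x y : Eucl n) :
    conv μ R K (x + y) ≤ conv μ R K x + conv μ R K y := by
  obtain ⟨p, q, h, hx, hy⟩ := exists_plane hn x y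
  have hxy : x + y = (⟪p, x + y⟫ : ℝ) • p + (⟪q, x + y⟫ : ℝ) • q := by
    conv_lhs => rw [hx, hy]
    rw [inner_add_right, inner_add_right]
    module
  have int : ∀ (x : Eucl n) (t : ℝ),
      Integrable (fun u => suppFn K (plA p q x (R p u) + t • plW p q (R p u))) μ := by
    intro x t
    have hc : Continuous fun u => plA p q x (R p u) + t • plW p q (R p u) :=
      ((plA_cont p q x).comp (R p).continuous).add
        (((plW_cont p q).comp (R p).continuous).const_smul t)
    obtain ⟨c, hc'⟩ := (isCompact_sphere (0 : Eucl n) 1).exists_bound_of_continuousOn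
      hc.continuousOn
    exact integrable_supp hs K _ hc c fun u hu => hc' u (mem_sphere_zero_iff_norm.2 hu)
  have int' : ∀ (x : Eucl n) (t : ℝ),
      Integrable (fun u => suppFn K (plA p q x (R p u) - t • plW p q (R p u))) μ := by
    intro x t
    have := int x (-t)
    simpa only [neg_smul, ← sub_eq_add_neg] using this
  have key : ∀ x : Eucl n, x = (⟪p, x⟫ : ℝ) • p + (⟪q, x⟫ : ℝ) • q → 2 * conv μ R K x =
      ∫ u, (suppFn K (plA p q x (R p u) + ‖x‖ • plW p q (R p u))
        + suppFn K (plA p q x (R p u) - ‖x‖ • plW p q (R p u))) ∂μ := by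
    intro x hx
    rw [integral_add (int x _) (int' x _), ← conv_plane hz hR K h x hx,
      ← conv_plane' hn hz hR K h x hx]
    ring
  have int2 : ∀ x : Eucl n,
      Integrable (fun u => suppFn K (plA p q x (R p u) + ‖x‖ • plW p q (R p u))
        + suppFn K (plA p q x (R p u) - ‖x‖ • plW p q (R p u))) μ := fun x =>
    (int x _).add (int' x _)
  have : 2 * conv μ R K (x + y) ≤ 2 * conv μ R K x + 2 * conv μ R K y := by
    rw [key _ hxy, key _ hx, key _ hy, ← integral_add (int2 x) (int2 y)]
    refine integral_mono (int2 _) ((int2 x).add (int2 y)) fun u => ?_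
    change suppFn K (plA p q (x + y) (R p u) + ‖x + y‖ • plW p q (R p u))
        + suppFn K (plA p q (x + y) (R p u) - ‖x + y‖ • plW p q (R p u)) ≤
      (suppFn K (plA p q x (R p u) + ‖x‖ • plW p q (R p u))
        + suppFn K (plA p q x (R p u) - ‖x‖ • plW p q (R p u))) +
      (suppFn K (plA p q y (R p u) + ‖y‖ • plW p q (R p u))
        + suppFn K (plA p q y (R p u) - ‖y‖ • plW p q (R p u)))
    simp only [plA_add]
    exact supp_sym_add K _ _ _ _ _ _ (norm_nonneg _) (norm_add_le x y)
  linarith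

lemma conv_hom (K : ConvexBody (Eucl n)) (c : ℝ) (hc : 0 < c) (x : Eucl n) :
    conv μ R K (c • x) = c * conv μ R K x := by
  have e1 : ‖c • x‖ = c * ‖x‖ := by rw [norm_smul, Real.norm_of_nonneg hc.le]
  have e2 : ‖c • x‖⁻¹ • c • x = ‖x‖⁻¹ • x := by
    rw [e1, smul_smul, mul_inv]
    congr 1
    field_simp
  unfold conv
  rw [e2, e1, mul_assoc]

lemma conv_bound [IsFiniteMeasure μ]
    (hs : μ (Metric.sphere (0 : Eucl n) 1)ᶜ = 0) (K : ConvexBody (Eucl n)) :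
    ∃ C : ℝ, 0 ≤ C ∧ ∀ x, conv μ R K x ≤ C * ‖x‖ := by
  obtain ⟨C, hC0, hC⟩ := supp_bound K
  refine ⟨C * μ.real Set.univ, by positivity, fun x => ?_⟩
  have hae : ∀ᵐ u ∂μ, u ∈ Metric.sphere (0 : Eucl n) 1 := by
    rw [ae_iff]; exact hs
  unfold conv
  rw [mul_comm]
  refine mul_le_mul_of_nonneg_right ((le_abs_self _).trans ?_) (norm_nonneg x)
  rw [← Real.norm_eq_abs]
  refine norm_integral_le_of_norm_le_const (μ := μ) ?_
  filter_upwards [hae] with u hu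
  rw [mem_sphere_zero_iff_norm] at hu
  have := hC (R (‖x‖⁻¹ • x) u)
  rwa [LinearIsometryEquiv.norm_map, hu, mul_one] at this

end

end Kid

/-- Kiderlen: if `μ` is a non-negative zonal Borel measure on `S^{n-1}`
with center of mass at the origin, then for every convex body `K` the convolution
`h_K ∗ μ`, given at `v ∈ S^{n-1}` by `∫ h_K(R_v u) dμ(u)` for any rotation `R_v` taking
the pole `ē` to `v`, is the support function of a convex body `Ψ₁ K`, and
`Ψ₁ : K^n → K^n` is a continuous, translation invariant, `SO(n)` equivariant Minkowski
valuation of degree 1. -/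
theorem kiderlen_zonal_measure_generates_MVal (n : ℕ) (hn : 2 ≤ n)
    (e : Eucl n) (he : ‖e‖ = 1)
    (μ : Measure (Eucl n)) [IsFiniteMeasure μ]
    (hsupp : μ (Metric.sphere (0 : Eucl n) 1)ᶜ = 0)
    (hzonal : ∀ g : Eucl n ≃ₗᵢ[ℝ] Eucl n,
      g e = e → LinearEquiv.det g.toLinearEquiv = 1 → μ.map g = μ)
    (hcent : ∀ x : Eucl n, (∫ u, (⟪x, u⟫ : ℝ) ∂μ) = 0)
    (R : Eucl n → (Eucl n ≃ₗᵢ[ℝ] Eucl n))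
    (hR : ∀ v : Eucl n, ‖v‖ = 1 →
      R v e = v ∧ LinearEquiv.det (R v).toLinearEquiv = 1) :
    ∃ Ψ : ConvexBody (Eucl n) → ConvexBody (Eucl n),
      (∀ (K : ConvexBody (Eucl n)) (v : Eucl n), ‖v‖ = 1 →
        suppFn (Ψ K) v = ∫ u, suppFn K (R v u) ∂μ)
      ∧ (∀ K L M N : ConvexBody (Eucl n),
          Convex ℝ ((K : Set (Eucl n)) ∪ L) →
          (M : Set (Eucl n)) = (K : Set (Eucl n)) ∪ L →
          (N : Set (Eucl n)) = (K : Set (Eucl n)) ∩ L →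
          Ψ K + Ψ L = Ψ M + Ψ N)
      ∧ Continuous Ψ
      ∧ (∀ (x : Eucl n) (K K' : ConvexBody (Eucl n)),
          (K' : Set (Eucl n)) = (fun y => x + y) '' (K : Set (Eucl n)) → Ψ K' = Ψ K)
      ∧ (∀ (c : ℝ), 0 < c → ∀ K : ConvexBody (Eucl n), Ψ (c • K) = c • Ψ K)
      ∧ (∀ g : Eucl n ≃ₗᵢ[ℝ] Eucl n, LinearEquiv.det g.toLinearEquiv = 1 →
          ∀ K K' : ConvexBody (Eucl n), (K' : Set (Eucl n)) = g '' (K : Set (Eucl n)) →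
            (Ψ K' : Set (Eucl n)) = g '' (Ψ K : Set (Eucl n))) := by
  have hz : Kid.Zonal e μ := hzonal
  have hae : ∀ᵐ u ∂μ, u ∈ Metric.sphere (0 : Eucl n) 1 := by
    rw [ae_iff]; exact hsupp
  have ex : ∀ K : ConvexBody (Eucl n), ∃ L : ConvexBody (Eucl n), ∀ v : Eucl n, ‖v‖ = 1 →
      suppFn L v = ∫ u, suppFn K (R v u) ∂μ := by
    intro K
    obtain ⟨C, hC0, hC⟩ := Kid.conv_bound (R := R) hsupp K
    obtain ⟨L, hL⟩ := Kid.exists_body (Kid.conv μ R K) C hC0 (Kid.conv_hom K)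
      (Kid.conv_add hn hsupp hz hR K) hC
    refine ⟨L, fun v hv => ?_⟩
    rw [hL v (by rw [← norm_ne_zero_iff, hv]; norm_num), Kid.conv, hv]
    simp
  choose Ψ hΨ using ex
  have int : ∀ (K : ConvexBody (Eucl n)) (g : Eucl n ≃ₗᵢ[ℝ] Eucl n),
      Integrable (fun u => suppFn K (g u)) μ := fun K g =>
    Kid.integrable_supp hsupp K g g.continuous 1 fun u hu => by rw [g.norm_map, hu]
  refine ⟨Ψ, hΨ, ?_, ?_, ?_, ?_, ?_⟩
  · intro K L M N hc hM hN
    refine Kid.eq_of_supp _ _ fun v hv => ?_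
    rw [Kid.supp_add, Kid.supp_add, hΨ K v hv, hΨ L v hv, hΨ M v hv, hΨ N v hv,
      ← integral_add (int _ _) (int _ _), ← integral_add (int _ _) (int _ _)]
    simp_rw [Kid.supp_valuation K L M N hc hM hN]
  · have hlip : LipschitzWith ⟨μ.real Set.univ, measureReal_nonneg⟩ Ψ := by
      refine LipschitzWith.of_dist_le_mul fun K L => ?_
      refine Kid.dist_le_of_supp _ _ _ (mul_nonneg measureReal_nonneg dist_nonneg) fun v hv => ?_
      rw [hΨ K v hv, hΨ L v hv, ← integral_sub (int _ _) (int _ _)]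
      change _ ≤ μ.real Set.univ * dist K L
      rw [mul_comm]
      rw [← Real.norm_eq_abs]
      refine norm_integral_le_of_norm_le_const (μ := μ) ?_
      filter_upwards [hae] with u hu
      rw [mem_sphere_zero_iff_norm] at hu
      exact Kid.abs_supp_sub_le_dist K L _ (by rw [LinearIsometryEquiv.norm_map, hu])
    exact hlip.continuous
  · intro x K K' h
    refine Kid.eq_of_supp _ _ fun v hv => ?_
    rw [hΨ K v hv, hΨ K' v hv]
    simp_rw [Kid.supp_translate x K K' h]
    have key : ∀ u, (⟪R v u, x⟫ : ℝ) = ⟪(R v).symm x, u⟫ := fun u => by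
      rw [real_inner_comm, ← (R v).inner_map_map ((R v).symm x) u, (R v).apply_symm_apply]
    simp_rw [key]
    have hi : Integrable (fun u => (⟪(R v).symm x, u⟫ : ℝ)) μ := by
      refine Integrable.of_bound (C := ‖x‖) (by fun_prop) ?_
      filter_upwards [hae] with u hu
      rw [mem_sphere_zero_iff_norm] at hu
      have := norm_inner_le_norm (𝕜 := ℝ) ((R v).symm x) u
      rwa [hu, mul_one, LinearIsometryEquiv.norm_map] at this
    rw [integral_add (int _ _) hi, hcent, add_zero]
  · intro c hc K
    refine Kid.eq_of_supp _ _ fun v hv => ?_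
    rw [Kid.supp_csmul _ c hc, hΨ _ v hv, hΨ _ v hv, ← integral_const_mul]
    simp_rw [Kid.supp_csmul _ c hc]
  · intro g hg K K' h
    let B : ConvexBody (Eucl n) := ⟨g '' (Ψ K : Set (Eucl n)),
      (Ψ K).convex.linear_image g.toLinearEquiv.toLinearMap,
      (Ψ K).isCompact.image g.continuous, (Ψ K).nonempty.image _⟩
    have hB : Ψ K' = B := by
      refine Kid.eq_of_supp _ _ fun v hv => ?_
      have hv' : ‖g.symm v‖ = 1 := by rw [LinearIsometryEquiv.norm_map, hv]
      rw [Kid.supp_rot g (Ψ K) B rfl, hΨ _ v hv, hΨ _ _ hv']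
      simp_rw [Kid.supp_rot g K K' h]
      refine Kid.integral_indep hz ((R v).trans g.symm) (R (g.symm v)) ?_ (hR _ hv').2 ?_
        (suppFn K)
      · rw [Kid.det_trans, Kid.det_symm, hg, (hR v hv).2]; simp
      · rw [(hR _ hv').1, LinearIsometryEquiv.trans_apply, (hR v hv).1]
    rw [hB]
    rfl
end
end
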